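/- arXiv:2510.26248 — 4 statements merged into one kernel-verified Lean document; each statement's English description precedes it below -/
import Mathlib

section
/- Let k ⊆ L be an extension of algebraically closed fields of characteristic zero. The map θ : L^× × L → Ω¹_{L/k} defined by θ(y, x) = y⁻¹·dy − dx is a homomorphism from the group L^× × L (multiplicative group times additive group) to the additive group of Ω¹_{L/k}, and its kernel is exactly k^× × k. In particular, θ induces an injective group homomorphism (L^× × L)/(k^× × k) → Ω¹_{L/k}. -/
/-!
The map `θ` is additive by the Leibniz rule and kills `k^× × k`. For the rest of the kernel, suppose
`dy = y dx` with `y ≠ 0`; the point is that `x` must be algebraic over `k`, hence in `k`, after which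
`dy = 0` forces `y ∈ k` as well.

In characteristic zero `L` is formally étale over the polynomial ring on any transcendence basis, so
values prescribed on an algebraically independent family extend to a `k`-derivation of `L`
(`exists_derivation_of_algebraicIndependent`). In particular `dz = 0` implies that `z` is algebraic
over `k` (`isAlgebraic_of_D_eq_zero`).

Suppose `x` is transcendental. If `x, y` were algebraically independent, a derivation with `δ x = 0`
and `δ y = 1` would contradict `δ y = y δ x`; so `y` is a root of a nonzero polynomial over `k[x]`.
A derivation with `δ x = 1` satisfies `δ y = y`, that is, `y` behaves like `exp x`, and such a `y` is
not algebraic over `k[x]` (`eval₂_ne_zero_of_derivation_eq_self`): differentiating a relation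
`∑ aᵢ(x) yⁱ = 0` of minimal degree `n` yields a proportional relation, whose extreme coefficients give
`aₙ a₀' - aₙ' a₀ = n aₙ a₀`, impossible by comparing degrees in `x`.
-/

open Polynomial

/-- Values on a transcendence basis extend to a derivation: with `A` the polynomial ring on the basis,
`L` is separable algebraic over the fraction field of `A`, hence formally étale over `A`, so
`Ω[L⁄k]` is the base change of `Ω[A⁄k]` and derivations of `A` into `L` extend to `L`. -/
lemma exists_derivation_of_isTranscendenceBasis (k L : Type*) [Field k] [Field L] [Algebra k L] [CharZero L]
   (B : Set L) (hB : IsTranscendenceBasis k ((↑) : B → L)) (f : B → L) :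
   ∃ δ : Derivation k L L, ∀ b : B, δ b = f b := by
  let A := MvPolynomial B k
  let : Algebra A L := (MvPolynomial.aeval ((↑) : B → L)).toAlgebra
  have hA : ∀ p : A, algebraMap A L p = MvPolynomial.aeval ((↑) : B → L) p := fun _ => rfl
  have : IsScalarTower k A L := .of_algebraMap_eq fun r => by
    rw [hA, MvPolynomial.algebraMap_eq, MvPolynomial.aeval_C]
  have hinj : Function.Injective (algebraMap A L) := hB.1
  have : FaithfulSMul A L := (faithfulSMul_iff_algebraMap_injective A L).2 hinj
  have : CharZero A := by
    exact (RingHom.charZero_iff hinj).2 inferInstance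
  let : Algebra (FractionRing A) L := FractionRing.liftAlgebra A L
  have : IsScalarTower A (FractionRing A) L := inferInstance
  have : CharZero (FractionRing A) :=
    (RingHom.charZero_iff (algebraMap (FractionRing A) L).injective).2 inferInstance
  have : Algebra.IsAlgebraic A L := by
    have halg := hB.isAlgebraic
    refine Algebra.IsAlgebraic.of_ringHom_of_comp_eq (S := Algebra.adjoin k (Set.range ((↑) : B → L)))
      (B := L) (hB.1.aevalEquiv : A →+* _) (RingHom.id L) hB.1.aevalEquiv.surjective
      Function.injective_id ?_
    ext p <;> simp [hA]
  have : Algebra.IsAlgebraic (FractionRing A) L := by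
    exact IsFractionRing.comap_isAlgebraic_iff.1 ‹Algebra.IsAlgebraic A L›
  have : Algebra.FormallyEtale (FractionRing A) L := .of_isSeparable _ _
  have : Algebra.FormallyEtale A (FractionRing A) := .of_isLocalization (nonZeroDivisors A)
  have : Algebra.FormallyEtale A L := .comp A (FractionRing A) L
  let d₀ : Derivation k A L := MvPolynomial.mkDerivation k f
  let e := KaehlerDifferential.tensorKaehlerEquivOfFormallyEtale k A L
  let φ : KaehlerDifferential k L →ₗ[L] L := (d₀.liftKaehlerDifferential.liftBaseChange L) ∘ₗ e.symm.toLinearMap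
  refine ⟨φ.compDer (KaehlerDifferential.D k L), fun b => ?_⟩
  have hb : (b : L) = algebraMap A L (MvPolynomial.X b) := by simp [hA]
  rw [hb]
  have h : φ (KaehlerDifferential.D k L (algebraMap A L (MvPolynomial.X b))) =
      d₀ (MvPolynomial.X b) := by
    simp [φ, e, KaehlerDifferential.tensorKaehlerEquivOfFormallyEtale_symm_D_algebraMap]
  exact h.trans (MvPolynomial.mkDerivation_X k f b)

lemma exists_derivation_of_algebraicIndependent (k L : Type*) [Field k] [Field L] [Algebra k L]
    [CharZero L] {ι : Type*} (v : ι → L) (hv : AlgebraicIndependent k v) (f : ι → L) :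
    ∃ δ : Derivation k L L, ∀ i, δ (v i) = f i := by
  obtain ⟨B, hsub, hB⟩ := exists_isTranscendenceBasis_superset (R := k) hv.to_subtype_range
  obtain ⟨δ, hδ⟩ := exists_derivation_of_isTranscendenceBasis k L B hB
    (fun b => Function.extend v f 0 (b : L))
  refine ⟨δ, fun i => ?_⟩
  rw [hδ ⟨v i, hsub ⟨i, rfl⟩⟩]
  exact hv.injective.extend_apply f 0 i

lemma isAlgebraic_of_D_eq_zero (k L : Type*) [Field k] [Field L] [Algebra k L] [CharZero L] (x : L)
    (hx : KaehlerDifferential.D k L x = 0) : IsAlgebraic k x := by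
  by_contra h
  obtain ⟨δ, hδ⟩ := exists_derivation_of_algebraicIndependent k L (fun _ : Unit => x)
    (algebraicIndependent_unique_type_iff.2 h) (fun _ => 1)
  have h1 := hδ ()
  rw [← δ.liftKaehlerDifferential_comp_D, hx, map_zero] at h1
  exact zero_ne_one h1

lemma mem_range_algebraMap_of_isAlgebraic {k L : Type*} [Field k] [Field L] [Algebra k L]
    [IsAlgClosed k] {x : L} (hx : IsAlgebraic k x) : x ∈ Set.range (algebraMap k L) :=
  minpoly.mem_range_of_degree_eq_one k x
    (IsAlgClosed.degree_eq_one_of_irreducible k (minpoly.irreducible hx.isIntegral))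

/-- If `x` is transcendental over `k` and `δ x = 1`, a nonzero solution `y` of `δ y = y` is
transcendental over `k[x]`. Here `k[X][X]` stands for `k[x][Y]`. By strong induction on the degree in
`Y`, a relation `P` may be assumed to have minimal degree. -/
lemma eval₂_ne_zero_of_derivation_eq_self (k L : Type*) [Field k] [Field L] [Algebra k L] [CharZero L]
   (δ : Derivation k L L) (x y : L) (hx : Transcendental k x) (hδx : δ x = 1) (hδy : δ y = y)
   (hy : y ≠ 0) (P : k[X][X]) (hP : P ≠ 0) : P.eval₂ (aeval x : k[X] →ₐ[k] L).toRingHom y ≠ 0 := by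
  have : CharZero k := (RingHom.charZero_iff (algebraMap k L).injective).2 inferInstance
  generalize hn : P.natDegree = n
  induction n using Nat.strong_induction_on generalizing P with
  | _ n ih =>
  intro h0
  set φ : k[X] →+* L := (aeval x : k[X] →ₐ[k] L).toRingHom with hφ
  have hφi : ∀ p, φ p = 0 → p = 0 := fun p hp => by
    by_contra hne
    exact hx ⟨p, hne, hp⟩
  have hδφ : ∀ p : k[X], δ (φ p) = φ (derivative p) := fun p => by
    change δ (aeval x p) = aeval x (derivative p)
    rw [Derivation.map_aeval, hδx, smul_eq_mul, mul_one]
  -- A relation without constant term is divisible by `y ≠ 0`, giving one of smaller degree.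
  have ha0 : P.coeff 0 ≠ 0 := by
    intro h
    have e := P.divX_mul_X_add
    rw [h, map_zero, add_zero] at e
    have hd : P.divX ≠ 0 := by rintro h; rw [h, zero_mul] at e; exact hP e.symm
    have hnd : P.natDegree = P.divX.natDegree + 1 := by
      conv_lhs => rw [← e]
      exact natDegree_mul_X hd
    refine ih _ (by omega) P.divX hd rfl ?_
    rw [← e, eval₂_mul, eval₂_X] at h0
    exact (mul_eq_zero.1 h0).resolve_right hy
  have hn0 : n ≠ 0 := by
    rintro rfl
    rw [eq_C_of_natDegree_eq_zero hn, eval₂_C] at h0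
    exact ha0 (hφi _ h0)
  -- `Q = aₙ (∑ (aᵢ' + i aᵢ) Yⁱ) - (aₙ' + n aₙ) P`: the relation obtained by applying `δ`, with its
  -- leading term cancelled against that of `P`.
  let c : ℕ → k[X] := fun i => P.coeff n * (derivative (P.coeff i) + i * P.coeff i)
     - (derivative (P.coeff n) + n * P.coeff n) * P.coeff i
  let Q : k[X][X] := ∑ i ∈ Finset.range n, monomial i (c i)
  have hPs : ∑ i ∈ Finset.range (n+1), φ (P.coeff i) * y ^ i = 0 := by
    rw [← h0, eval₂_eq_sum_range, hn]
  have hdP : ∑ i ∈ Finset.range (n+1), φ (derivative (P.coeff i) + i * P.coeff i) * y ^ i = 0 := by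
    have := congrArg δ hPs
    rw [map_zero, map_sum] at this
    rw [← this]
    refine Finset.sum_congr rfl fun i _ => ?_
    rw [Derivation.leibniz, Derivation.leibniz_pow, hδφ, hδy]
    rcases i with _ | i
    · simp
    · simp [pow_succ]; ring
  have hQ0 : Q.eval₂ φ y = 0 := by
    have : ∑ i ∈ Finset.range (n+1), φ (c i) * y ^ i = 0 := by
      have h1 := congrArg (φ (P.coeff n) * ·) hdP
      have h2 := congrArg (φ (derivative (P.coeff n) + n * P.coeff n) * ·) hPs
      simp only [Finset.mul_sum, mul_zero] at h1 h2
      rw [← sub_zero (0 : L)]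
      nth_rewrite 1 [← h1]
      rw [← h2, ← Finset.sum_sub_distrib]
      refine Finset.sum_congr rfl fun i _ => ?_
      simp only [c, map_sub, map_mul]; ring
    have hcn : c n = 0 := by simp only [c]; ring
    rw [Finset.sum_range_succ, hcn] at this
    simpa [Q, eval₂_finsetSum] using this
  have hQ : Q = 0 := by
    by_contra hne
    refine ih _ ?_ Q hne rfl hQ0
    refine (natDegree_lt_iff_degree_lt hne).2 ?_
    refine (degree_sum_le _ _).trans_lt ?_
    refine (Finset.sup_lt_iff (WithBot.bot_lt_coe n)).2 fun i hi => ?_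
    exact (degree_monomial_le _ _).trans_lt (by exact WithBot.coe_lt_coe.2 (Nat.cast_lt.2 (Finset.mem_range.1 hi)))
  have hc0 : c 0 = 0 := by
    have := congrArg (fun q => coeff q 0) hQ
    simpa [Q, finsetSum_coeff, coeff_monomial, Nat.pos_of_ne_zero hn0, hn0] using this
  have han : P.coeff n ≠ 0 := by rw [← hn]; exact leadingCoeff_ne_zero.2 hP
  -- The right side of `key` has degree `deg a + deg b`, while the left side has smaller degree.
  set a := P.coeff n
  set b := P.coeff 0
  have key : a * derivative b - derivative a * b = (n : k) • (a * b) := by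
    have : a * derivative b - derivative a * b = n * (a * b) := by
      simp only [c, Nat.cast_zero] at hc0; linear_combination hc0
    rw [this, smul_eq_C_mul]; simp
  have hn' : (n : k) ≠ 0 := by exact_mod_cast hn0
  have hlt : degree (a * derivative b - derivative a * b) < degree (a * b) := by
    refine (degree_sub_le _ _).trans_lt (max_lt ?_ ?_)
    · rw [degree_mul, degree_mul]
      exact WithBot.add_lt_add_left (degree_ne_bot.2 han) (degree_derivative_lt ha0)
    · rw [degree_mul, degree_mul]
      exact WithBot.add_lt_add_right (degree_ne_bot.2 ha0) (degree_derivative_lt han)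
  rw [key, degree_smul_of_smul_regular _ (IsSMulRegular.of_ne_zero hn')] at hlt
  exact lt_irrefl _ hlt

/-- The differential equation `dy = y dx` has no solution with `x` transcendental and `y ≠ 0`. -/
lemma not_D_eq_smul_D (k L : Type*) [Field k] [Field L] [Algebra k L] [CharZero L] (x y : L)
    (hx : Transcendental k x) (hy : y ≠ 0) :
    KaehlerDifferential.D k L y ≠ y • KaehlerDifferential.D k L x := by
  intro hD
  have hδ : ∀ δ : Derivation k L L, δ y = y * δ x := fun δ => by
    rw [← δ.liftKaehlerDifferential_comp_D, hD, map_smul, δ.liftKaehlerDifferential_comp_D,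
      smul_eq_mul]
  have hxi : AlgebraicIndependent k (fun _ : Unit => x) :=
    algebraicIndependent_unique_type_iff.2 hx
  have halg : IsAlgebraic (Algebra.adjoin k (Set.range fun _ : Unit => x)) y := by
    by_contra h
    obtain ⟨δ, h'⟩ := exists_derivation_of_algebraicIndependent k L _
      ((hxi.option_iff_transcendental y).2 h) (fun o => o.elim 1 0)
    have h1 : δ y = 1 := h' none
    have h2 : δ x = 0 := h' (some ())
    rw [hδ, h2, mul_zero] at h1
    exact zero_ne_one h1
  obtain ⟨δ, h'⟩ := exists_derivation_of_algebraicIndependent k L _ hxi 1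
  have hδx : δ x = 1 := h' ()
  let φ : k[X] →ₐ[k] L := aeval x
  let ψ : k[X] →ₐ[k] Algebra.adjoin k (Set.range fun _ : Unit => x) :=
    φ.codRestrict _ fun p => by
      rw [Set.range_const]
      exact aeval_mem_adjoin_singleton k x
  have hψ : Function.Surjective ψ := by
    rintro ⟨z, hz⟩
    have hz' := hz
    rw [Set.range_const, Algebra.adjoin_singleton_eq_range_aeval] at hz'
    obtain ⟨p, hp⟩ := hz'
    exact ⟨p, Subtype.ext hp⟩
  -- Lift the algebraic relation for `y` from the subalgebra `k[x]` to the polynomial ring `k[X]`.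
  obtain ⟨P, hP, hP0⟩ := halg
  obtain ⟨R, rfl⟩ := map_surjective (ψ : k[X] →+* _) hψ P
  refine eval₂_ne_zero_of_derivation_eq_self k L δ x y hx hδx (by rw [hδ, hδx, mul_one]) hy R
    (fun h => hP (by rw [h, Polynomial.map_zero])) ?_
  rw [aeval_def, eval₂_map] at hP0
  exact hP0

theorem stmt0 (k L : Type*) [Field k] [Field L] [Algebra k L]
    [CharZero L] [IsAlgClosed k] [IsAlgClosed L]
    (θ : Lˣ × L → KaehlerDifferential k L)
    (hθ : ∀ p : Lˣ × L,
      θ p = (((p.1⁻¹ : Lˣ) : L)) • KaehlerDifferential.D k L ((p.1 : L))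
        - KaehlerDifferential.D k L p.2) :
    -- θ is a group homomorphism
    (∀ p q : Lˣ × L, θ (p.1 * q.1, p.2 + q.2) = θ p + θ q) ∧
    -- its kernel is exactly k^× × k
    (∀ p : Lˣ × L, θ p = 0 ↔
      ((p.1 : L) ∈ Set.range (algebraMap k L) ∧ p.2 ∈ Set.range (algebraMap k L))) ∧
    -- hence θ induces an injective homomorphism (L^× × L)/(k^× × k) → Ω¹_{L/k}
    (∀ p q : Lˣ × L, θ p = θ q →
      (((p.1 * q.1⁻¹ : Lˣ) : L) ∈ Set.range (algebraMap k L) ∧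
        p.2 - q.2 ∈ Set.range (algebraMap k L))) := by
  have hadd : ∀ p q : Lˣ × L, θ (p.1 * q.1, p.2 + q.2) = θ p + θ q := by
    rintro ⟨y, x⟩ ⟨z, w⟩
    simp only [hθ, Units.val_mul, Derivation.leibniz, map_add, mul_inv, smul_add, smul_smul]
    have h1 : ((y⁻¹ : Lˣ) : L) * ((z⁻¹ : Lˣ) : L) * (y : L) = ((z⁻¹ : Lˣ) : L) := by
      rw [mul_right_comm, Units.inv_mul, one_mul]
    have h2 : ((y⁻¹ : Lˣ) : L) * ((z⁻¹ : Lˣ) : L) * (z : L) = ((y⁻¹ : Lˣ) : L) := by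
      rw [mul_assoc, Units.inv_mul, mul_one]
    rw [h1, h2]
    abel
  have hker : ∀ p : Lˣ × L, θ p = 0 ↔
      ((p.1 : L) ∈ Set.range (algebraMap k L) ∧ p.2 ∈ Set.range (algebraMap k L)) := by
    rintro ⟨y, x⟩
    constructor
    · intro h
      rw [hθ, sub_eq_zero] at h
      have hD : KaehlerDifferential.D k L (y : L) = (y : L) • KaehlerDifferential.D k L x := by
        rw [← h, smul_smul, Units.mul_inv, one_smul]
      have hx : IsAlgebraic k x := by
        by_contra hx
        exact not_D_eq_smul_D k L x y hx y.ne_zero hD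
      obtain ⟨c, rfl⟩ := mem_range_algebraMap_of_isAlgebraic hx
      refine ⟨mem_range_algebraMap_of_isAlgebraic (isAlgebraic_of_D_eq_zero k L _ ?_), c, rfl⟩
      rw [hD, Derivation.map_algebraMap, smul_zero]
    · rintro ⟨⟨a, ha⟩, ⟨b, hb⟩⟩
      rw [hθ, ← ha, ← hb, Derivation.map_algebraMap, Derivation.map_algebraMap, smul_zero,
        sub_zero]
  refine ⟨hadd, hker, fun p q hpq => (hker (p.1 * q.1⁻¹, p.2 - q.2)).1 ?_⟩
  -- `θ (p q⁻¹) + θ q = θ p` by additivity.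
  have h := hadd (p.1 * q.1⁻¹, p.2 - q.2) q
  simp only [inv_mul_cancel_right, sub_add_cancel] at h
  rw [Prod.mk.eta, hpq] at h
  exact left_eq_add.1 (h.trans (add_comm _ _))
end

section
/- Let (K, ∂) be a differential field of characteristic zero and let k ⊆ L ⊆ K be algebraically closed intermediate fields with trdeg(L/k) finite and with the same constants, i.e. every x ∈ L with ∂x = 0 lies in k. Let Der_Γ(L/k) = {D ∈ Der_k(L) : D(y) = y·D(x) for all (y, x) ∈ Γ(L)}. Assume moreover that k is self-sufficient in L, i.e. δ(M/k) ≥ 0 for every algebraically closed intermediate field M with k ⊆ M ⊆ L. Then δ(L/k) = 0 if and only if Der_Γ(L/k) = {0}. -/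
/-!
Choose a `ℚ`-basis of `Γ(L)/Γ(k)`; a derivation in `Der_k(L)` lies in `Der_Γ(L/k)` exactly when it
is annihilated by the differentials `dy/y - dx` attached to the basis elements, because these
differentials are additive on `Γ(L)` and vanish on `Γ(k)`. Since `Der_k(L)` has dimension
`trdeg(L/k)` over `L` (`finrank_derivation`), fewer than `trdeg(L/k)` differentials leave a nonzero
common zero (`exists_ne_zero_of_lt`), so `Der_Γ(L/k) = 0` forces
`dim Γ(L)/Γ(k) ≥ trdeg(L/k)`; self-sufficiency gives the other inequality.

Conversely, let `δ(L/k) = 0` and let `X ∈ Der_Γ(L/k)` have field of constants `M`. Then `M` is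
algebraically closed, self-sufficiency gives `dim Γ(M)/Γ(k) ≤ trdeg(M/k)`, and additivity of both
invariants along `k ⊆ M ⊆ L` gives `dim Γ(L)/Γ(M) ≥ trdeg(L/M)`
(`eq_zero_of_selfSufficient`). If `X ≠ 0`, this contradicts Ax's theorem for the differential field
`(L, X)` with constants `M` (lemma `ax`): among `n ≥ trdeg(L/M)` solutions of `X y = y · X x`, some
nontrivial product `∏ yᵢ ^ mᵢ` is constant, and then so is `∑ mᵢ xᵢ`.

For Ax's theorem, the `n` differentials `dyᵢ/yᵢ - dxᵢ` are killed by `X`, hence lie in a space of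
dimension `trdeg(L/M) - 1` and are dependent over `L`. They are also killed by the Lie derivative
along `X`, so a dependence may be chosen with coefficients in `M` (`indep_over_constants`). Writing
the coefficients in a `ℤ`-basis of the group they generate makes `∑ bⱼ dzⱼ/zⱼ` exact, where the
constants `bⱼ` are `ℤ`-independent and the `zⱼ` are monomials in the `yᵢ`. Taking residues shows
that the `zⱼ` are algebraic over `M` (`isAlgebraic_of_exact`). The residue is computed after
enlarging the constants so that `L` is algebraic over the rational functions in `z = zⱼ`, and
descending to these by norm and trace (`residue_algebraic`, `residue_rational`).
-/

open scoped Classical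

noncomputable section

variable {K : Type*} [Field K]

/-- Membership in `Γ(L)` for a subfield `L` of the differential field `(K, der)`:
pairs `(y, x) ∈ L^× × L` with `dery = y·derx`. -/
def GammaMem (der : K → K) (L : Subfield K) (p : Kˣ × K) : Prop :=
  (p.1 : K) ∈ L ∧ p.2 ∈ L ∧ der (p.1 : K) = (p.1 : K) * der p.2

/-- A family of elements of `Γ(K)` is `ℚ`-linearly independent modulo `Γ(k)`
(equivalently, `ℤ`-linearly independent, since the quotient is torsion-free):
no nontrivial integer combination lies in `Γ(k)`. -/
def GammaIndep (der : K → K) (k : Subfield K) {n : ℕ} (f : Fin n → Kˣ × K) : Prop :=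
  ∀ m : Fin n → ℤ,
    GammaMem der k (∏ i, (f i).1 ^ m i, ∑ i, (m i : K) * (f i).2) → m = 0

/-- `dim_ℚ (Γ(L)/Γ(k))` as an extended natural number: the supremum of the sizes of
finite families of elements of `Γ(L)` that are independent modulo `Γ(k)`. -/
def gammaDim (der : K → K) (k L : Subfield K) : ℕ∞ :=
  ⨆ (n : ℕ) (_ : ∃ f : Fin n → Kˣ × K, (∀ i, GammaMem der L (f i)) ∧ GammaIndep der k f),
    (n : ℕ∞)

/-- A finite family of elements of `K` is algebraically independent over the subfield `k`. -/
def AlgIndepOver (k : Subfield K) {n : ℕ} (x : Fin n → K) : Prop :=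
  ∀ P : MvPolynomial (Fin n) K, (∀ m, MvPolynomial.coeff m P ∈ k) →
    MvPolynomial.eval x P = 0 → P = 0

/-- The transcendence degree of `L` over `k` as an extended natural number: the supremum of
the sizes of finite families of elements of `L` algebraically independent over `k`. -/
def trdegE (k L : Subfield K) : ℕ∞ :=
  ⨆ (n : ℕ) (_ : ∃ x : Fin n → K, (∀ i, x i ∈ L) ∧ AlgIndepOver k x), (n : ℕ∞)

/-- The exponential predimension `δ(L/k) = trdeg(L/k) − dim_ℚ(Γ(L)/Γ(k)) ∈ ℤ ∪ {−∞}`,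
with `δ(L/k) = −∞` when the dimension is infinite. -/
def deltaPre (der : K → K) (k L : Subfield K) : WithBot ℤ :=
  if gammaDim der k L = ⊤ then ⊥
  else (((trdegE k L).toNat : ℤ) - ((gammaDim der k L).toNat : ℤ) : ℤ)

/-- A subfield `k` of `K` is self-sufficient in `K` if `δ(L/k) ≥ 0` for every algebraically
closed intermediate field `L ⊇ k` of finite transcendence degree over `k`. -/
def SelfSufficientIn (der : K → K) (k : Subfield K) : Prop :=
  ∀ L : Subfield K, k ≤ L → IsAlgClosed ↥L → trdegE k L ≠ ⊤ → 0 ≤ deltaPre der k L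

end

/-!
STATEMENT 4: With `k ⊆ L ⊆ K` algebraically closed, `trdeg(L/k)` finite, same constants,
and `k` self-sufficient in `L`, one has `δ(L/k) = 0` iff `Der_Γ(L/k) = {0}`.
-/

section
variable {K : Type*} [Field K]

/-- `D : L → L` is a `k`-linear derivation of `L` (additive, Leibniz, vanishing on `k`). -/
def IsRelDer (k L : Subfield K) (D : ↥L → ↥L) : Prop :=
  (∀ a b : ↥L, D (a + b) = D a + D b) ∧
  (∀ a b : ↥L, D (a * b) = a * D b + b * D a) ∧
  (∀ a : ↥L, (a : K) ∈ k → D a = 0)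

/-- `D ∈ Der_Γ(L/k)`: a `k`-linear derivation of `L` with `D(y) = y·D(x)` for every
`(y, x) ∈ Γ(L)`. -/
def InDerGamma (der : K → K) (k L : Subfield K) (D : ↥L → ↥L) : Prop :=
  IsRelDer k L D ∧
  ∀ p : Kˣ × K, (hp : GammaMem der L p) →
    D ⟨(p.1 : K), hp.1⟩ = ⟨(p.1 : K), hp.1⟩ * D ⟨p.2, hp.2.1⟩

end

open Polynomial

namespace AxPredim

/-! ### Derivations and fields of constants -/

section Derivations

variable {C L : Type*} [Field C] [Field L] [Algebra C L]

/-- The field of constants `ker X` of a `C`-derivation `X` of the field `L`. -/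
def kerField (X : Derivation C L L) : IntermediateField C L where
  carrier := {a | X a = 0}
  mul_mem' {a b} ha hb := by
    simp only [Set.mem_ofPred_eq] at ha hb ⊢
    simp [ha, hb]
  add_mem' {a b} ha hb := by
    simp only [Set.mem_ofPred_eq] at ha hb ⊢
    simp [ha, hb]
  algebraMap_mem' a := by simp
  inv_mem' a ha := by
    simp only [Set.mem_ofPred_eq] at ha ⊢
    simp [Derivation.leibniz_inv, ha]

lemma mem_kerField {X : Derivation C L L} {a : L} : a ∈ kerField X ↔ X a = 0 := Iff.rfl

/-- A derivation of `L`, regarded as linear over its own field of constants. -/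
def overKer (X : Derivation C L L) : Derivation (kerField X) L L :=
  Derivation.mk'
    { toFun := X
      map_add' := map_add X
      map_smul' := fun c a => by
        have hc : X (c : L) = 0 := c.2
        simp [Algebra.smul_def, hc] }
    fun a b => by simp

lemma overKer_apply (X : Derivation C L L) (a : L) : overKer X a = X a := rfl

variable [CharZero L]

lemma derivation_eq_zero_of_isAlgebraic (X : Derivation C L L) {a : L}
    (ha : IsAlgebraic C a) : X a = 0 := by
  have : CharZero C := (algebraMap C L).charZero_iff (algebraMap C L).injective |>.2 inferInstance
  have hi := ha.isIntegral
  have hsep : (minpoly C a).Separable := (minpoly.irreducible hi).separable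
  have h1 : X (aeval a (minpoly C a)) = 0 := by simp
  rw [Derivation.map_aeval, smul_eq_mul] at h1
  exact (mul_eq_zero.1 h1).resolve_left (hsep.aeval_derivative_ne_zero (minpoly.aeval _ _))

lemma mem_kerField_of_isAlgebraic (X : Derivation C L L) {a : L}
    (ha : IsAlgebraic (kerField X) a) : a ∈ kerField X :=
  derivation_eq_zero_of_isAlgebraic (overKer X) ha

lemma derivation_eq_zero_of_basis {ι : Type*} {t : ι → L} (ht : IsTranscendenceBasis C t)
    (X : Derivation C L L) (h : ∀ i, X (t i) = 0) : X = 0 := by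
  have hle : IntermediateField.adjoin C (Set.range t) ≤ kerField X := by
    rw [IntermediateField.adjoin_le_iff]
    rintro _ ⟨i, rfl⟩
    exact h i
  have halg := ht.isAlgebraic_field
  ext a
  refine mem_kerField_of_isAlgebraic X ?_
  let := (IntermediateField.inclusion hle).toRingHom.toAlgebra
  have : IsScalarTower (IntermediateField.adjoin C (Set.range t)) (kerField X) L :=
    IsScalarTower.of_algebraMap_eq fun _ => rfl
  exact (halg.isAlgebraic a).tower_top _

/-- In characteristic zero a derivation may be prescribed freely on a transcendence basis `t`:
`L` is formally étale over `C[t]`, so `Ω[L⁄C]` is the base change of the free module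
`Ω[C[t]⁄C]`. -/
lemma exists_derivation {ι : Type*} {t : ι → L} (ht : IsTranscendenceBasis C t) (v : ι → L) :
    ∃ X : Derivation C L L, ∀ i, X (t i) = v i := by
  have : CharZero C := (algebraMap C L).charZero_iff (algebraMap C L).injective |>.2 inferInstance
  let : Algebra (MvPolynomial ι C) L := (MvPolynomial.aeval t).toRingHom.toAlgebra
  have hP : ∀ p : (MvPolynomial ι C), algebraMap (MvPolynomial ι C) L p = MvPolynomial.aeval t p := fun _ => rfl
  have : IsScalarTower C (MvPolynomial ι C) L := IsScalarTower.of_algebraMap_eq fun c => by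
    rw [hP, AlgHom.commutes]
  have hinj : Function.Injective (algebraMap (MvPolynomial ι C) L) := ht.1
  have : FaithfulSMul (MvPolynomial ι C) L := (faithfulSMul_iff_algebraMap_injective (MvPolynomial ι C) L).2 hinj
  let F := FractionRing (MvPolynomial ι C)
  let : Algebra F L := FractionRing.liftAlgebra (MvPolynomial ι C) L
  have : IsScalarTower (MvPolynomial ι C) F L := FractionRing.isScalarTower_liftAlgebra (MvPolynomial ι C) L
  have : CharZero F := (algebraMap F L).charZero_iff (algebraMap F L).injective |>.2 inferInstance
  have : Algebra.IsAlgebraic F L := by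
    constructor
    intro a
    have h1 := ht.isAlgebraic.isAlgebraic a
    have h2 : IsAlgebraic (MvPolynomial ι C) a := by
      obtain ⟨p, hp0, hp⟩ := h1
      let e : (MvPolynomial ι C) ≃ₐ[C] Algebra.adjoin C (Set.range t) := ht.1.aevalEquiv
      have he : (algebraMap (MvPolynomial ι C) L).comp e.symm.toRingEquiv.toRingHom = algebraMap _ L := by
        refine RingHom.ext fun x => ?_
        obtain ⟨y, rfl⟩ := e.surjective x
        change algebraMap (MvPolynomial ι C) L (e.symm (e y)) = _
        rw [e.symm_apply_apply, hP]
        rfl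
      refine ⟨p.map e.symm.toRingEquiv.toRingHom, ?_, ?_⟩
      · rwa [Ne, Polynomial.map_eq_zero_iff e.symm.injective]
      · rwa [aeval_def, eval₂_map, he, ← aeval_def]
    exact h2.extendScalars (IsFractionRing.injective (MvPolynomial ι C) F)
  have : Algebra.FormallyEtale (MvPolynomial ι C) F := Algebra.FormallyEtale.of_isLocalization (nonZeroDivisors (MvPolynomial ι C))
  have : Algebra.FormallyEtale F L := Algebra.FormallyEtale.of_isSeparable F L
  have : Algebra.FormallyEtale (MvPolynomial ι C) L := Algebra.FormallyEtale.comp (MvPolynomial ι C) F L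
  have hb := KaehlerDifferential.isBaseChange_of_formallyEtale C (MvPolynomial ι C) L
  let d : Derivation C (MvPolynomial ι C) L := MvPolynomial.mkDerivation C v
  refine ⟨(hb.lift d.liftKaehlerDifferential).compDer (KaehlerDifferential.D C L), fun i => ?_⟩
  have h1 : t i = algebraMap (MvPolynomial ι C) L (MvPolynomial.X i) := by simp [hP]
  have h2 := hb.lift_eq d.liftKaehlerDifferential (KaehlerDifferential.D C (MvPolynomial ι C) (MvPolynomial.X i))
  rw [KaehlerDifferential.map_D, ← h1, Derivation.liftKaehlerDifferential_comp_D] at h2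
  refine h2.trans ?_
  exact MvPolynomial.mkDerivation_X C v i

lemma finrank_derivation {ι : Type*} [Fintype ι] {t : ι → L} (ht : IsTranscendenceBasis C t) :
    Module.Finite L (Derivation C L L) ∧
      Module.finrank L (Derivation C L L) = Fintype.card ι := by
  let T : Derivation C L L →ₗ[L] (ι → L) :=
    { toFun := fun X i => X (t i)
      map_add' := fun _ _ => rfl
      map_smul' := fun _ _ => rfl }
  let e : Derivation C L L ≃ₗ[L] (ι → L) := LinearEquiv.ofBijective T
    ⟨by
      rw [injective_iff_map_eq_zero]
      exact fun X hX => derivation_eq_zero_of_basis ht X (congrFun hX),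
     fun v => (exists_derivation ht v).imp fun X hX => funext hX⟩
  exact ⟨Module.Finite.equiv e.symm, by rw [e.finrank_eq]; simp⟩

end Derivations

/-! ### Residues of logarithmic differentials -/

section Residue

variable {C L : Type*} [Field C] [Field L] [Algebra C L]

/-- The local ring of `C(z)` at `z = 0`, realised inside `L`: the elements `p(z) / q(z)` with
`q(0) ≠ 0`, for `z` transcendental over `C`. -/
def localRing (z : L) (_hz : Transcendental C z) : Subring L where
  carrier := {u | ∃ p q : C[X], q.eval 0 ≠ 0 ∧ u * aeval z q = aeval z p}
  mul_mem' := by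
    rintro a b ⟨p, q, hq, h⟩ ⟨p', q', hq', h'⟩
    exact ⟨p * p', q * q', by simp [hq, hq'], by rw [map_mul, map_mul, ← h, ← h']; ring⟩
  one_mem' := ⟨1, 1, by simp, by simp⟩
  add_mem' := by
    rintro a b ⟨p, q, hq, h⟩ ⟨p', q', hq', h'⟩
    refine ⟨p * q' + p' * q, q * q', by simp [hq, hq'], ?_⟩
    simp only [map_mul, map_add, ← h, ← h']; ring
  zero_mem' := ⟨0, 1, by simp, by simp⟩
  neg_mem' := by
    rintro a ⟨p, q, hq, h⟩
    exact ⟨-p, q, hq, by rw [map_neg, ← h]; ring⟩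

variable {z : L} {hz : Transcendental C z}

lemma mem_localRing {u : L} : u ∈ localRing z hz ↔
    ∃ p q : C[X], q.eval 0 ≠ 0 ∧ u * aeval z q = aeval z p := Iff.rfl

lemma aeval_ne_zero (hz : Transcendental C z) {q : C[X]} (hq : q ≠ 0) : aeval z q ≠ 0 :=
  fun h => hz ⟨q, hq, h⟩

lemma algebraMap_mem_localRing (c : C) : algebraMap C L c ∈ localRing z hz :=
  ⟨Polynomial.C c, 1, by simp, by simp⟩

lemma self_mem_localRing : z ∈ localRing z hz := ⟨X, 1, by simp, by simp⟩

lemma inv_notMem_localRing : z⁻¹ ∉ localRing z hz := by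
  rintro ⟨p, q, hq, h⟩
  have hz0 : z ≠ 0 := fun h0 => hz (h0 ▸ isAlgebraic_zero)
  have h1 : aeval z q = aeval z (X * p) := by
    rw [map_mul, ← h, aeval_X, mul_inv_cancel_left₀ hz0]
  have h2 : q = X * p := transcendental_iff_injective.1 hz h1
  exact hq (by simp [h2])

lemma derivation_mem_localRing {D : Derivation C L L} (hD : D z = 1) {u : L}
    (hu : u ∈ localRing z hz) : D u ∈ localRing z hz := by
  obtain ⟨p, q, hq, h⟩ := hu
  have hq0 : aeval z q ≠ 0 := aeval_ne_zero hz (by rintro rfl; simp at hq)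
  refine ⟨derivative p * q - p * derivative q, q ^ 2, by simpa using hq, ?_⟩
  have h1 := congrArg D h
  rw [Derivation.leibniz, Derivation.map_aeval, Derivation.map_aeval, hD] at h1
  simp only [smul_eq_mul, mul_one] at h1
  simp only [map_sub, map_mul, map_pow, ← h, ← h1]
  ring

/-- Every nonzero element of `C(z)` is a power of the uniformiser `z` times a unit of
the local ring at `z = 0`. -/
lemma exists_zpow_mul_unit (hz : Transcendental C z) {u : L} (hu : u ∈ IntermediateField.adjoin C {z})
    (hu0 : u ≠ 0) : ∃ (e : ℤ) (g : L), g ≠ 0 ∧ g ∈ localRing z hz ∧ g⁻¹ ∈ localRing z hz ∧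
      u = z ^ e * g := by
  have hz0 : z ≠ 0 := fun h0 => hz (h0 ▸ isAlgebraic_zero)
  obtain ⟨p, q, rfl⟩ := (IntermediateField.mem_adjoin_simple_iff C u).1 hu
  have hp : p ≠ 0 := by rintro rfl; simp at hu0
  have hq : q ≠ 0 := by rintro rfl; simp at hu0
  obtain ⟨p', hp', hpd⟩ := exists_eq_pow_rootMultiplicity_mul_and_not_dvd p hp 0
  obtain ⟨q', hq', hqd⟩ := exists_eq_pow_rootMultiplicity_mul_and_not_dvd q hq 0
  generalize rootMultiplicity 0 p = m at hp'
  generalize rootMultiplicity 0 q = n at hq'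
  rw [dvd_iff_isRoot, IsRoot.def] at hpd hqd
  have hp0 : aeval z p' ≠ 0 := aeval_ne_zero hz (by rintro rfl; simp at hpd)
  have hq0 : aeval z q' ≠ 0 := aeval_ne_zero hz (by rintro rfl; simp at hqd)
  refine ⟨(m : ℤ) - n, aeval z p' / aeval z q', div_ne_zero hp0 hq0, ⟨p', q', hqd, ?_⟩,
    ⟨q', p', hpd, ?_⟩, ?_⟩
  · field_simp
  · field_simp
  · rw [hp', hq', zpow_sub₀ hz0]
    simp only [map_mul, map_pow, aeval_X, map_zero, sub_zero, zpow_natCast]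
    field_simp

/-- Residues at `z = 0` in the rational function field: if `∑ bⱼ uⱼ'/uⱼ = v'` in `C(z)` with
constant `bⱼ` linearly independent over `ℤ`, then no `uⱼ` can be a positive power of `z`. -/
lemma residue_rational [CharZero L] {ι : Type*} [Fintype ι]
    (D : Derivation C L L) (hD : D z = 1) (b : ι → C) (hb : LinearIndependent ℤ b)
    (u : ι → L) (hu : ∀ j, u j ∈ IntermediateField.adjoin C {z}) (hu0 : ∀ j, u j ≠ 0)
    (v : L) (hv : v ∈ IntermediateField.adjoin C {z})
    (h : ∑ j, algebraMap C L (b j) * (D (u j) / u j) = D v) (j₀ : ι) (m : ℕ) (hm : m ≠ 0)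
    (hj : u j₀ = z ^ m) (hz : Transcendental C z) : False := by
  have hz0 : z ≠ 0 := fun h0 => hz (h0 ▸ isAlgebraic_zero)
  set O := localRing z hz with hO
  have hzO : z ∈ O := self_mem_localRing
  -- a unit of `O` is not divisible by `z` in `O`
  have hunit : ∀ g ∈ O, g⁻¹ ∈ O → g ≠ 0 → ∀ r ∈ O, g ≠ z * r := by
    intro g _ hg' hg0 r hr hgr
    refine inv_notMem_localRing (z := z) (hz := hz) ?_
    have : z⁻¹ = r * g⁻¹ := by
      have : r ≠ 0 := by rintro rfl; simp at hgr; exact hg0 hgr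
      rw [hgr]; field_simp
    rw [this]
    exact O.mul_mem hr hg'
  choose e g hg0 hgO hgO' hue using fun j => exists_zpow_mul_unit hz (hu j) (hu0 j)
  have hDz : ∀ n : ℤ, D (z ^ n) = n * z ^ n / z := by
    intro n
    rw [Derivation.leibniz_zpow, hD]
    simp only [smul_eq_mul, mul_one, zsmul_eq_mul]
    rw [zpow_sub_one₀ hz0]; field_simp
  have hlog : ∀ j, z * (D (u j) / u j) = e j + z * (D (g j) * (g j)⁻¹) := by
    intro j
    have := hg0 j
    have := zpow_ne_zero (e j) hz0
    rw [hue j, Derivation.leibniz, hDz, smul_eq_mul, smul_eq_mul]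
    field_simp
    ring
  set E : C := ∑ j, e j • b j with hE
  have hE0 : E ≠ 0 := by
    intro h0
    have h1 := Fintype.linearIndependent_iff.1 hb e h0 j₀
    have h2 := hue j₀
    rw [h1, hj, zpow_zero, one_mul] at h2
    refine hunit (g j₀) (hgO _) (hgO' _) (hg0 _) (z ^ (m - 1)) (O.pow_mem hzO _) ?_
    rw [← h2, ← pow_succ', Nat.sub_add_cancel (Nat.pos_of_ne_zero hm)]
  have hEL : algebraMap C L E ≠ 0 := by simpa using hE0
  set r : L := ∑ j, algebraMap C L (b j) * (D (g j) * (g j)⁻¹) with hr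
  have hrO : r ∈ O := O.sum_mem fun j _ => O.mul_mem (algebraMap_mem_localRing _)
    (O.mul_mem (derivation_mem_localRing hD (hgO j)) (hgO' j))
  have hmain : algebraMap C L E + z * r = z * D v := by
    rw [← h, hE, hr, Finset.mul_sum, Finset.mul_sum, map_sum, ← Finset.sum_add_distrib]
    refine Finset.sum_congr rfl fun j _ => ?_
    have := hlog j
    rw [map_zsmul, zsmul_eq_mul, mul_left_comm z _ (D (u j) / u j), this]
    ring
  have hEunit : ∀ r ∈ O, algebraMap C L E ≠ z * r := hunit _ (algebraMap_mem_localRing _)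
    (by rw [← map_inv₀]; exact algebraMap_mem_localRing _) hEL
  by_cases hv0 : v = 0
  · refine hEunit (-r) (O.neg_mem hrO) ?_
    rw [hv0, map_zero, mul_zero] at hmain
    linear_combination hmain
  obtain ⟨s, w, hw0, hwO, hwO', rfl⟩ := exists_zpow_mul_unit hz hv hv0
  have hDw : D w ∈ O := derivation_mem_localRing hD hwO
  have hmain2 : algebraMap C L E + z * r = z ^ s * (s * w + z * D w) := by
    rw [hmain, Derivation.leibniz, hDz, smul_eq_mul, smul_eq_mul]
    field_simp
    ring
  have hEO : algebraMap C L E ∈ O := algebraMap_mem_localRing _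
  have hsO : ∀ s : ℤ, (s : L) ∈ O := fun s => by
    rw [← map_intCast (algebraMap C L)]; exact algebraMap_mem_localRing _
  rcases lt_trichotomy s 0 with hs | rfl | hs
  · obtain ⟨n, rfl⟩ : ∃ n : ℕ, s = -((n + 1 : ℕ) : ℤ) :=
      ⟨(-s - 1).toNat, by push_cast; omega⟩
    rw [zpow_neg, zpow_natCast] at hmain2
    set N : L := ((-((n + 1 : ℕ) : ℤ) : ℤ) : L) with hN
    have hN0 : N ≠ 0 := by rw [hN, Int.cast_ne_zero]; omega
    have hNinv : N⁻¹ ∈ O := by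
      have := algebraMap_mem_localRing (hz := hz) ((-((n + 1 : ℕ) : ℤ) : ℤ) : C)⁻¹
      rw [map_inv₀] at this
      simpa [hN] using this
    refine hunit (N * w) (O.mul_mem (hsO _) hwO) ?_ (mul_ne_zero hN0 hw0)
      (z ^ n * (algebraMap C L E + z * r) - D w) ?_ ?_
    · rw [mul_inv]; exact O.mul_mem hNinv hwO'
    · exact O.sub_mem (O.mul_mem (O.pow_mem hzO _) (O.add_mem hEO (O.mul_mem hzO hrO))) hDw
    · rw [hmain2]
      field_simp
      ring
  · refine hEunit (D w - r) (O.sub_mem hDw hrO) ?_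
    simp only [zpow_zero, Int.cast_zero, zero_mul, zero_add, one_mul] at hmain2
    linear_combination hmain2
  · obtain ⟨n, rfl⟩ : ∃ n : ℕ, s = ((n + 1 : ℕ) : ℤ) :=
      ⟨(s - 1).toNat, by push_cast; omega⟩
    rw [zpow_natCast] at hmain2
    refine hEunit (z ^ n * (((n + 1 : ℕ) : ℤ) * w + z * D w) - r)
      (O.sub_mem (O.mul_mem (O.pow_mem hzO _) (O.add_mem (O.mul_mem (hsO _) hwO)
        (O.mul_mem hzO hDw))) hrO) ?_
    linear_combination hmain2

/-- Automorphisms over `C(z)` commute with derivations of an algebraic extension of `C(z)`. -/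
lemma derivation_comm [CharZero L] (D : Derivation C L L) (hD : D z = 1)
    [Algebra.IsAlgebraic (IntermediateField.adjoin C {z}) L]
    (σ : L ≃ₐ[IntermediateField.adjoin C {z}] L) (a : L) : D (σ a) = σ (D a) := by
  have hC : ∀ c : C, σ (algebraMap C L c) = algebraMap C L c := fun c =>
    σ.commutes (algebraMap C (IntermediateField.adjoin C {z}) c)
  have hC' : ∀ c : C, σ.symm (algebraMap C L c) = algebraMap C L c := fun c =>
    σ.symm.commutes (algebraMap C (IntermediateField.adjoin C {z}) c)
  let D' : Derivation C L L := Derivation.mk'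
    { toFun := fun a => σ.symm (D (σ a)) - D a
      map_add' := fun a b => by simp; ring
      map_smul' := fun c a => by simp [Algebra.smul_def, hC, hC', mul_sub] }
    fun a b => by simp; ring
  have hD' : ∀ a, D' a = σ.symm (D (σ a)) - D a := fun _ => rfl
  have hz' : σ z = z :=
    σ.commutes ⟨z, IntermediateField.mem_adjoin_simple_self C z⟩
  have hle : IntermediateField.adjoin C {z} ≤ kerField D' := by
    rw [IntermediateField.adjoin_le_iff, Set.singleton_subset_iff]
    change D' z = 0
    rw [hD', hz', hD, map_one, sub_self]
  have ha : D' a = 0 := by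
    refine mem_kerField_of_isAlgebraic D' ?_
    let := (IntermediateField.inclusion hle).toRingHom.toAlgebra
    have : IsScalarTower (IntermediateField.adjoin C {z}) (kerField D') L :=
      IsScalarTower.of_algebraMap_eq fun _ => rfl
    exact (Algebra.IsAlgebraic.isAlgebraic
      (R := IntermediateField.adjoin C {z}) a).tower_top _
  rw [hD', sub_eq_zero] at ha
  rw [← ha, σ.apply_symm_apply]

lemma logDeriv_prod {κ : Type*} (s : Finset κ) (D : Derivation C L L) (y : κ → L)
    (hy : ∀ i ∈ s, y i ≠ 0) : D (∏ i ∈ s, y i) / ∏ i ∈ s, y i = ∑ i ∈ s, D (y i) / y i := by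
  induction s using Finset.induction_on with
  | empty => simp
  | insert i s hi ih =>
    have h1 := hy i (Finset.mem_insert_self _ _)
    have h2 : ∏ i ∈ s, y i ≠ 0 :=
      Finset.prod_ne_zero_iff.2 fun i hi => hy i (Finset.mem_insert_of_mem hi)
    rw [Finset.prod_insert hi, Finset.sum_insert hi,
      ← ih fun i hi => hy i (Finset.mem_insert_of_mem hi), Derivation.leibniz, smul_eq_mul,
      smul_eq_mul]
    field_simp
    ring

/-- The residue lemma on algebraic functions of `z`: taking norms of the `yⱼ` and the trace of `w`
down to `C(z)` reduces it to rational functions, the norm of `z` being a positive power of `z`. -/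
lemma residue_algebraic [CharZero L] [IsAlgClosed L] {ι : Type*} [Fintype ι]
    (D : Derivation C L L) (hD : D z = 1)
    [Algebra.IsAlgebraic (IntermediateField.adjoin C {z}) L]
    (b : ι → C) (hb : LinearIndependent ℤ b)
    (y : ι → L) (hy0 : ∀ j, y j ≠ 0) (w : L)
    (h : ∑ j, algebraMap C L (b j) * (D (y j) / y j) = D w) (j₀ : ι)
    (hj : y j₀ = z) : False := by
  have hz : Transcendental C z := fun ha => by
    rw [derivation_eq_zero_of_isAlgebraic D ha] at hD
    exact zero_ne_one hD
  let F := IntermediateField.adjoin C {z}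
  have : CharZero F := (algebraMap F L).charZero_iff (algebraMap F L).injective |>.2 inferInstance
  let S : Set L := insert w (Set.range y)
  have hS : S.Finite := (Set.finite_range y).insert w
  have : Finite S := hS
  have : FiniteDimensional F (IntermediateField.adjoin F S) :=
    IntermediateField.finiteDimensional_adjoin fun x _ =>
      (Algebra.IsAlgebraic.isAlgebraic (R := F) x).isIntegral
  have : IsAlgClosure F L := ⟨inferInstance, inferInstance⟩
  have : Normal F L := IsAlgClosure.normal F L
  let N := IntermediateField.normalClosure F (IntermediateField.adjoin F S) L
  have : FiniteDimensional F N := normalClosure.is_finiteDimensional _ _ _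
  have : Normal F N := normalClosure.normal F (IntermediateField.adjoin F S) L
  have : IsGalois F N := ⟨⟩
  have hSN : ∀ x ∈ S, x ∈ N := fun x hx =>
    IntermediateField.le_normalClosure _ (IntermediateField.subset_adjoin F S hx)
  let τ : (N ≃ₐ[F] N) → (L ≃ₐ[F] L) := fun σ => σ.liftNormal L
  have hτ : ∀ σ (x : N), τ σ (x : L) = (σ x : N) := fun σ x => σ.liftNormal_commutes L x
  have hprod : ∀ x ∈ S, ∏ σ, τ σ x ∈ F := by
    intro x hx
    have := congrArg (algebraMap N L) (Algebra.norm_eq_prod_automorphisms F (⟨x, hSN x hx⟩ : N))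
    rw [map_prod] at this
    have h2 : ∏ σ, τ σ x = ∏ σ : (N ≃ₐ[F] N), algebraMap N L (σ ⟨x, hSN x hx⟩) :=
      Finset.prod_congr rfl fun σ _ => hτ σ ⟨x, hSN x hx⟩
    rw [h2, ← this]
    exact (Algebra.norm F (⟨x, hSN x hx⟩ : N)).2
  have hsum : ∀ x ∈ S, ∑ σ, τ σ x ∈ F := by
    intro x hx
    have := congrArg (algebraMap N L) (trace_eq_sum_automorphisms (K := F) (⟨x, hSN x hx⟩ : N))
    rw [map_sum] at this
    have h2 : ∑ σ, τ σ x = ∑ σ : (N ≃ₐ[F] N), algebraMap N L (σ ⟨x, hSN x hx⟩) :=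
      Finset.sum_congr rfl fun σ _ => hτ σ ⟨x, hSN x hx⟩
    rw [h2, ← this]
    exact (Algebra.trace F N (⟨x, hSN x hx⟩ : N)).2
  have hyS : ∀ j, y j ∈ S := fun j => Set.mem_insert_of_mem _ (Set.mem_range_self j)
  have hτ0 : ∀ σ j, τ σ (y j) ≠ 0 := fun σ j => by simpa using hy0 j
  refine residue_rational D hD b hb (fun j => ∏ σ, τ σ (y j)) (fun j => hprod _ (hyS j))
    (fun j => Finset.prod_ne_zero_iff.2 fun σ _ => hτ0 σ j) (∑ σ, τ σ w)
    (hsum w (Set.mem_insert _ _)) ?_ j₀ (Fintype.card (N ≃ₐ[F] N)) Fintype.card_ne_zero ?_ hz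
  · simp only [logDeriv_prod _ D _ fun σ _ => hτ0 σ _, Finset.mul_sum]
    rw [Finset.sum_comm, map_sum]
    refine Finset.sum_congr rfl fun σ _ => ?_
    rw [derivation_comm D hD, ← h, map_sum]
    refine Finset.sum_congr rfl fun j _ => ?_
    have hC : τ σ (algebraMap C L (b j)) = algebraMap C L (b j) :=
      (τ σ).commutes (algebraMap C F (b j))
    rw [map_mul, hC, map_div₀, derivation_comm D hD]
  · have hz' : ∀ σ, τ σ z = z := fun σ =>
      (τ σ).commutes ⟨z, IntermediateField.mem_adjoin_simple_self C z⟩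
    simp only [hj, hz', Finset.prod_const, Finset.card_univ]

/-- If `∑ bⱼ dyⱼ/yⱼ` is exact, with constants `bⱼ ∈ C` linearly independent over `ℤ`, then every
`yⱼ` is algebraic over `C`: otherwise `yⱼ` is part of a transcendence basis, and the partial
derivative along it yields a nonzero residue. -/
lemma isAlgebraic_of_exact [CharZero L] [IsAlgClosed L] {ι : Type*} [Fintype ι]
    (b : ι → C) (hb : LinearIndependent ℤ b) (y : ι → L) (hy0 : ∀ j, y j ≠ 0) (w : L)
    (h : ∀ D : Derivation C L L, ∑ j, algebraMap C L (b j) * (D (y j) / y j) = D w) (j : ι) :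
    IsAlgebraic C (y j) := by
  by_contra hz
  have hind : AlgebraicIndepOn C id {y j} :=
    (algebraicIndependent_singleton_iff (⟨y j, rfl⟩ : ({y j} : Set L))).2 hz
  obtain ⟨s, hs, hbasis⟩ := exists_isTranscendenceBasis_superset hind
  obtain ⟨D, hD⟩ := exists_derivation hbasis fun i => if (i : L) = y j then 1 else 0
  have hDz : D (y j) = 1 := by simpa using hD ⟨y j, hs rfl⟩
  -- the field of constants of `D` contains the rest of the transcendence basis
  have halg : Algebra.IsAlgebraic (IntermediateField.adjoin (kerField D) {y j}) L := by
    let M := (IntermediateField.adjoin (kerField D) {y j}).restrictScalars C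
    have hle : IntermediateField.adjoin C (Set.range (Subtype.val : s → L)) ≤ M := by
      rw [IntermediateField.adjoin_le_iff]
      rintro _ ⟨i, rfl⟩
      by_cases hi : (i : L) = y j
      · rw [hi]; exact IntermediateField.mem_adjoin_simple_self (kerField D) (y j)
      · have : (i : L) ∈ kerField D := by
          have := hD i
          rwa [if_neg hi] at this
        exact (IntermediateField.adjoin (kerField D) {y j}).algebraMap_mem ⟨_, this⟩
    have h1 := hbasis.isAlgebraic_field
    constructor
    intro a
    let := (IntermediateField.inclusion hle).toRingHom.toAlgebra
    have : IsScalarTower (IntermediateField.adjoin C (Set.range (Subtype.val : s → L))) M L :=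
      IsScalarTower.of_algebraMap_eq fun _ => rfl
    exact (h1.isAlgebraic a).tower_top M
  refine residue_algebraic (overKer D) hDz (fun i => algebraMap C (kerField D) (b i)) ?_ y hy0 w
    (h D) j rfl
  exact hb.map' (algebraMap C (kerField D)).toAddMonoidHom.toIntLinearMap
    (LinearMap.ker_eq_bot.2 (algebraMap C (kerField D)).injective)

end Residue

/-! ### Ax's theorem for one derivation -/

section Ax

variable {C L : Type*} [Field C] [Field L] [Algebra C L]

/-- Functions `ωᵢ : V → L` killed by a `D`-connection `nabla` that are linearly independent over the
constants `C` of `D` are linearly independent over `L`: applying `nabla` to the expression of one of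
them through the others shows that its coefficients are constant. -/
lemma indep_over_constants (D : Derivation C L L)
    (hker : ∀ a, D a = 0 → a ∈ Set.range (algebraMap C L)) {V : Type*}
    (nabla : (V → L) →+ (V → L)) (hleib : ∀ (a : L) φ, nabla (a • φ) = D a • φ + a • nabla φ)
    {κ : Type*} (ω : κ → V → L) (h0 : ∀ i, nabla (ω i) = 0) (s : Finset κ) :
    LinearIndepOn C ω (s : Set κ) → LinearIndepOn L ω (s : Set κ) := by
  induction s using Finset.induction_on with
  | empty => intro _; simp [LinearIndepOn]
  | insert i s hi ih =>
    have hi' : i ∉ (s : Set κ) := by simpa using hi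
    rw [Finset.coe_insert, linearIndepOn_insert hi', linearIndepOn_insert hi']
    rintro ⟨hs, hspan⟩
    have hsL := ih hs
    refine ⟨hsL, fun hmem => hspan ?_⟩
    obtain ⟨a, ha⟩ := (Submodule.mem_span_image_finset_iff_exists_fun L).1 hmem
    have h1 : ∑ j ∈ s.attach, D (a j) • ω j = 0 := by
      have h2 := h0 i
      rw [← ha, map_sum] at h2
      rw [← h2]
      refine Finset.sum_congr rfl fun j _ => ?_
      rw [hleib, h0, smul_zero, add_zero]
    have h2 : ∀ j : s, D (a j) = 0 := by
      have h3 := linearIndependent_iff'.1 hsL s.attach (fun j => D (a j)) h1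
      exact fun j => h3 j (Finset.mem_attach _ _)
    choose c hc using fun j : s => hker _ (h2 j)
    refine (Submodule.mem_span_image_finset_iff_exists_fun C).2 ⟨c, ?_⟩
    rw [← ha]
    refine Finset.sum_congr rfl fun j _ => ?_
    rw [← hc, algebraMap_smul]

lemma logDeriv_prod_zpow {κ : Type*} [Fintype κ] (D : Derivation C L L) (y : κ → L)
    (hy : ∀ i, y i ≠ 0) (m : κ → ℤ) :
    D (∏ i, y i ^ m i) / ∏ i, y i ^ m i = ∑ i, (m i : L) * (D (y i) / y i) := by
  rw [logDeriv_prod _ _ _ fun i _ => zpow_ne_zero _ (hy i)]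
  refine Finset.sum_congr rfl fun i _ => ?_
  have h1 := hy i
  have h2 := zpow_ne_zero (m i) h1
  rw [Derivation.leibniz_zpow, zpow_sub_one₀ h1]
  simp only [smul_eq_mul, zsmul_eq_mul]
  field_simp

/-- The functional `X ↦ X y / y - X x` on derivations, i.e. the differential `dy/y - dx`. -/
def omega (y x : L) : Derivation C L L →ₗ[L] L where
  toFun X := X y / y - X x
  map_add' X Y := by simp only [Derivation.add_apply]; ring
  map_smul' a X := by simp only [Derivation.smul_apply, smul_eq_mul, RingHom.id_apply]; ring

lemma omega_apply (y x : L) (X : Derivation C L L) : omega y x X = X y / y - X x := rfl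

/-- Ax's theorem for one derivation `D` with field of constants `C`: among `n ≥ trdeg(L/C)` solutions
of `D y = y D x` there is a multiplicative relation modulo constants. -/
lemma ax [CharZero L] [IsAlgClosed L] (D : Derivation C L L) (hD : D ≠ 0)
    (hker : ∀ a, D a = 0 → a ∈ Set.range (algebraMap C L))
    {ι : Type*} [Fintype ι] {t : ι → L} (ht : IsTranscendenceBasis C t)
    {n : ℕ} (hn : Fintype.card ι ≤ n) (y x : Fin n → L) (hy0 : ∀ i, y i ≠ 0)
    (hxy : ∀ i, D (y i) = y i * D (x i)) :
    ∃ m : Fin n → ℤ, m ≠ 0 ∧ D (∏ i, y i ^ m i) = 0 := by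
  have : CharZero C := (algebraMap C L).charZero_iff (algebraMap C L).injective |>.2 inferInstance
  obtain ⟨hfin, hrank⟩ := finrank_derivation ht
  let ω : Fin n → Derivation C L L → L := fun i X => omega (y i) (x i) X
  -- all `ωᵢ` kill `D ≠ 0`, so they live in a space of dimension `trdeg(L/C) - 1 < n`
  have hdepL : ¬ LinearIndependent L ω := by
    intro hli
    have hli' : LinearIndependent L fun i => (omega (y i) (x i) : Derivation C L L →ₗ[L] L) :=
      LinearIndependent.of_comp (LinearMap.ltoFun L (Derivation C L L) L L) hli
    let W : Submodule L (Derivation C L L) := L ∙ D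
    have hmem : ∀ i, (omega (y i) (x i) : Module.Dual L (Derivation C L L)) ∈
        W.dualAnnihilator := by
      intro i
      rw [Submodule.mem_dualAnnihilator]
      intro X hX
      obtain ⟨a, rfl⟩ := Submodule.mem_span_singleton.1 hX
      rw [map_smul, omega_apply, hxy, mul_div_cancel_left₀ _ (hy0 i), sub_self, smul_zero]
    have hli'' : LinearIndependent L fun i => (⟨_, hmem i⟩ : W.dualAnnihilator) :=
      LinearIndependent.of_comp W.dualAnnihilator.subtype hli'
    have h1 := hli''.fintype_card_le_finrank
    have h2 := Subspace.finrank_add_finrank_dualAnnihilator_eq W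
    have h3 : Module.finrank L W = 1 := finrank_span_singleton hD
    rw [Fintype.card_fin] at h1
    omega
  -- the Lie derivative along `D` on functionals
  let nabla : (Derivation C L L → L) →+ (Derivation C L L → L) :=
    { toFun := fun φ X => D (φ X) - φ ⁅D, X⁆
      map_zero' := by funext X; simp
      map_add' := fun φ ψ => by funext X; simp only [Pi.add_apply, map_add]; ring }
  have hnabla : ∀ φ X, nabla φ X = D (φ X) - φ ⁅D, X⁆ := fun _ _ => rfl
  have hdepC : ¬ LinearIndependent C ω := by
    intro hli
    refine hdepL ?_
    have h1 := indep_over_constants D hker nabla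
      (fun a φ => by
        funext X
        simp only [hnabla, Pi.smul_apply, Pi.add_apply, smul_eq_mul, Derivation.leibniz]
        ring) ω
      (fun i => by
        funext X
        have h0 := hy0 i
        simp only [hnabla, ω, omega_apply, Derivation.commutator_apply, map_sub,
          Derivation.leibniz_div, hxy, smul_eq_mul, Derivation.leibniz, Pi.zero_apply]
        field_simp
        ring) Finset.univ
    simp only [Finset.coe_univ, linearIndepOn_univ_iff] at h1
    exact h1 hli
  obtain ⟨c, hc, i₀, hi₀⟩ := Fintype.not_linearIndependent_iff.1 hdepC
  -- a `ℤ`-basis of the group generated by the coefficients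
  let N : Submodule ℤ C := Submodule.span ℤ (Set.range c)
  have hNfin : Module.Finite ℤ N := Module.Finite.span_of_finite ℤ (Set.finite_range c)
  let B := Module.Free.chooseBasis ℤ N
  have hcN : ∀ i, c i ∈ N := fun i => Submodule.subset_span ⟨i, rfl⟩
  let a : Fin n → Module.Free.ChooseBasisIndex ℤ N → ℤ := fun i => B.repr ⟨c i, hcN i⟩
  have hca : ∀ i, c i = ∑ j, (a i j : C) * (B j : C) := by
    intro i
    have := congrArg N.subtype (B.sum_repr ⟨c i, hcN i⟩)
    rw [map_sum] at this
    rw [← show N.subtype ⟨c i, hcN i⟩ = c i from rfl, ← this]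
    refine Finset.sum_congr rfl fun j _ => ?_
    simp [a]
  obtain ⟨j, hj⟩ : ∃ j, a i₀ j ≠ 0 := by
    by_contra! h
    exact hi₀ (by rw [hca]; simp [h])
  refine ⟨fun i => a i j, fun h => hj (congrFun h i₀), ?_⟩
  refine derivation_eq_zero_of_isAlgebraic D (isAlgebraic_of_exact (fun j => (B j : C))
    (B.linearIndependent.map' N.subtype N.ker_subtype) (fun j => ∏ i, y i ^ a i j)
    (fun j => Finset.prod_ne_zero_iff.2 fun i _ => zpow_ne_zero _ (hy0 i))
    (∑ i, algebraMap C L (c i) * x i) (fun X => ?_) j)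
  have h1 : ∑ i, algebraMap C L (c i) * (X (y i) / y i - X (x i)) = 0 := by
    have := congrFun hc X
    simpa [ω, omega_apply, Algebra.smul_def] using this
  have h2 : X (∑ i, algebraMap C L (c i) * x i) = ∑ i, algebraMap C L (c i) * (X (y i) / y i) := by
    rw [map_sum, eq_comm, ← sub_eq_zero, ← Finset.sum_sub_distrib, ← h1]
    refine Finset.sum_congr rfl fun i _ => ?_
    simp [mul_sub]
  rw [h2]
  simp only [logDeriv_prod_zpow X y hy0, Finset.mul_sum]
  rw [Finset.sum_comm]
  refine Finset.sum_congr rfl fun i _ => ?_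
  rw [hca, map_sum, Finset.sum_mul]
  refine Finset.sum_congr rfl fun j _ => ?_
  rw [map_mul, map_intCast]
  ring

end Ax

/-! ### Transcendence degree and the dimension of `Γ` as ranks -/

section Dimensions

universe u

lemma iSup_natCast_eq_toENat {P : ℕ → Prop} {c : Cardinal.{u}}
    (h : ∀ n : ℕ, P n ↔ (n : Cardinal) ≤ c) :
    (⨆ (n : ℕ) (_ : P n), (n : ℕ∞)) = Cardinal.toENat c := by
  refine le_antisymm (iSup₂_le fun n hn => Cardinal.natCast_le_toENat.2 ((h n).1 hn)) ?_
  refine ENat.forall_natCast_le_iff_le.1 fun n hn => ?_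
  exact le_iSup₂_of_le n ((h n).2 (Cardinal.natCast_le_toENat.1 hn)) le_rfl

/-- Additivity of the rank along a chain of subgroups `P ≤ Q ≤ R`. -/
lemma rank_map_mkQ_add {A : Type u} [AddCommGroup A] {P Q R : Submodule ℤ A} (hPQ : P ≤ Q)
    (hQR : Q ≤ R) :
    Module.rank ℤ (R.map Q.mkQ) + Module.rank ℤ (Q.map P.mkQ) = Module.rank ℤ (R.map P.mkQ) := by
  let g : (A ⧸ P) →ₗ[ℤ] A ⧸ Q := P.mapQ Q LinearMap.id hPQ
  have hg : g ∘ₗ P.mkQ = Q.mkQ := by ext; rfl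
  let f := g.domRestrict (R.map P.mkQ)
  have hrange : LinearMap.range f = R.map Q.mkQ := by
    rw [LinearMap.range_domRestrict, ← Submodule.map_comp, hg]
  have hkerg : LinearMap.ker g = Q.map P.mkQ := by
    ext a
    obtain ⟨a, rfl⟩ := P.mkQ_surjective a
    have h1 : g (P.mkQ a) = Q.mkQ a := rfl
    rw [LinearMap.mem_ker, h1, Submodule.mkQ_apply, Submodule.Quotient.mk_eq_zero,
      Submodule.mem_map]
    refine ⟨fun h => ⟨a, h, rfl⟩, ?_⟩
    rintro ⟨b, hb, hab⟩
    have h2 := (Submodule.Quotient.eq P).1 hab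
    have := Q.sub_mem hb (hPQ h2)
    simpa using this
  have hker : LinearMap.ker f = (Q.map P.mkQ).comap (R.map P.mkQ).subtype := by
    rw [LinearMap.ker_domRestrict, hkerg]
  rw [← LinearMap.rank_range_add_rank_ker f, hrange, hker,
    (Submodule.comapSubtypeEquivOfLe (Submodule.map_mono (f := P.mkQ) hQR)).rank_eq]

variable {K : Type u} [Field K]

lemma algIndepOver_iff {k : Subfield K} {F : Type*} [Field F] [Algebra k F] (φ : F →+* K)
    (hφ : ∀ a : k, φ (algebraMap k F a) = a) {n : ℕ} (x : Fin n → F) :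
    AlgIndepOver k (fun i => φ (x i)) ↔ AlgebraicIndependent k x := by
  have hcomp : φ.comp (algebraMap k F) = k.subtype := RingHom.ext hφ
  have heval : ∀ Q : MvPolynomial (Fin n) k,
      MvPolynomial.eval (fun i => φ (x i)) (MvPolynomial.map k.subtype Q) =
        φ (MvPolynomial.aeval x Q) := by
    intro Q
    rw [MvPolynomial.eval_map, MvPolynomial.aeval_def, MvPolynomial.hom_eval₂, hcomp]
  have hinj := MvPolynomial.map_injective (σ := Fin n) k.subtype k.subtype.injective
  rw [algebraicIndependent_iff]
  constructor
  · intro h Q hQ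
    refine hinj ?_
    rw [map_zero]
    refine h _ (fun m => ?_) ?_
    · rw [MvPolynomial.coeff_map]; exact (MvPolynomial.coeff m Q).2
    · rw [heval, hQ, map_zero]
  · intro h P hP hP0
    obtain ⟨Q, rfl⟩ : P ∈ Set.range (MvPolynomial.map k.subtype) := by
      rw [MvPolynomial.mem_range_map_iff_coeffs_subset]
      intro c hc
      obtain ⟨m, _, rfl⟩ := MvPolynomial.mem_coeffs_iff.1 hc
      exact ⟨⟨_, hP m⟩, rfl⟩
    rw [heval, map_eq_zero] at hP0
    rw [h Q hP0, map_zero]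

lemma trdegE_eq {k R : Subfield K} {F : Type u} [Field F] [Algebra k F] (φ : F →+* K)
    (hφ : ∀ a : k, φ (algebraMap k F a) = a) (hR : ∀ a, a ∈ R ↔ ∃ b, φ b = a) :
    trdegE k R = Cardinal.toENat (Algebra.trdeg k F) := by
  refine iSup_natCast_eq_toENat fun n => ?_
  constructor
  · rintro ⟨x, hx, hind⟩
    choose y hy using fun i => (hR _).1 (hx i)
    obtain rfl : (fun i => φ (y i)) = x := funext hy
    simpa using ((algIndepOver_iff φ hφ y).1 hind).lift_cardinalMk_le_trdeg
  · intro hn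
    obtain ⟨s, hs⟩ := exists_isTranscendenceBasis k F
    rw [← hs.cardinalMk_eq_trdeg, ← Cardinal.lift_natCast.{u, 0}, ← Cardinal.mk_fin,
      ← Cardinal.lift_id'.{0, u} (Cardinal.mk s)] at hn
    obtain ⟨e⟩ := Cardinal.lift_mk_le'.1 hn
    exact ⟨fun i => φ (e i), fun i => (hR _).2 ⟨_, rfl⟩,
      (algIndepOver_iff φ hφ _).2 (hs.1.comp e e.injective)⟩

/-- `Γ(L)` as a subgroup of `Kˣ × K`, the first factor being written additively. -/
def Gam (δ : Derivation ℤ K K) (L : Subfield K) : Submodule ℤ (Additive Kˣ × K) :=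
  AddSubgroup.toIntSubmodule
    { carrier := {p | GammaMem δ L (p.1.toMul, p.2)}
      add_mem' := by
        rintro ⟨y, x⟩ ⟨y', x'⟩ ⟨h1, h2, h3⟩ ⟨h1', h2', h3'⟩
        refine ⟨?_, L.add_mem h2 h2', ?_⟩
        · simpa using L.mul_mem h1 h1'
        · simp only [Prod.mk_add_mk, toMul_add, Units.val_mul, Derivation.leibniz, map_add,
            smul_eq_mul] at h3 h3' ⊢
          rw [h3, h3']; ring
      zero_mem' := ⟨by simp, by simp, by simp⟩
      neg_mem' := by
        rintro ⟨y, x⟩ ⟨h1, h2, h3⟩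
        refine ⟨?_, L.neg_mem h2, ?_⟩
        · simpa using L.inv_mem h1
        · simp only [Prod.neg_mk, toMul_neg, Units.val_inv_eq_inv_val, Derivation.leibniz_inv,
            map_neg, smul_eq_mul] at h3 ⊢
          have : (y.toMul : K) ≠ 0 := Units.ne_zero _
          rw [h3]; field_simp }

lemma mem_Gam {δ : Derivation ℤ K K} {L : Subfield K} {p : Additive Kˣ × K} :
    p ∈ Gam δ L ↔ GammaMem δ L (p.1.toMul, p.2) := Iff.rfl

lemma Gam_mono (δ : Derivation ℤ K K) {k L : Subfield K} (h : k ≤ L) : Gam δ k ≤ Gam δ L :=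
  fun _ hp => ⟨h hp.1, h hp.2.1, hp.2.2⟩

lemma gammaIndep_iff (δ : Derivation ℤ K K) (k : Subfield K) {n : ℕ} (f : Fin n → Kˣ × K) :
    GammaIndep δ k f ↔
      LinearIndependent ℤ fun i => (Gam δ k).mkQ (Additive.ofMul (f i).1, (f i).2) := by
  rw [Fintype.linearIndependent_iff]
  refine forall_congr' fun m => ?_
  have h : ∑ i, m i • (Gam δ k).mkQ (Additive.ofMul (f i).1, (f i).2) = 0 ↔
      GammaMem δ k (∏ i, (f i).1 ^ m i, ∑ i, (m i : K) * (f i).2) := by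
    simp only [← map_zsmul, ← map_sum]
    rw [Submodule.mkQ_apply, Submodule.Quotient.mk_eq_zero, mem_Gam]
    simp [Prod.fst_sum, Prod.snd_sum, toMul_sum]
  rw [h, funext_iff]
  rfl

lemma exists_family_iff (δ : Derivation ℤ K K) (k L : Subfield K) (n : ℕ) :
    (∃ f : Fin n → Kˣ × K, (∀ i, GammaMem δ L (f i)) ∧ GammaIndep δ k f) ↔
      (n : Cardinal) ≤ Module.rank ℤ ((Gam δ L).map (Gam δ k).mkQ) := by
  constructor
  · rintro ⟨f, hf, hind⟩
    rw [gammaIndep_iff] at hind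
    have hmem : ∀ i, (Gam δ k).mkQ (Additive.ofMul (f i).1, (f i).2) ∈
        (Gam δ L).map (Gam δ k).mkQ := fun i => Submodule.mem_map_of_mem (hf i)
    have : LinearIndependent ℤ fun i => (⟨_, hmem i⟩ : (Gam δ L).map (Gam δ k).mkQ) :=
      LinearIndependent.of_comp ((Gam δ L).map (Gam δ k).mkQ).subtype hind
    simpa using this.cardinal_lift_le_rank
  · intro hn
    obtain ⟨s, hs, hind⟩ := exists_finset_linearIndependent_of_le_rank hn
    let e : Fin n ≃ s := (s.equivFinOfCardEq hs).symm
    have hind' : LinearIndependent ℤ fun i => ((e i : (Gam δ L).map (Gam δ k).mkQ) : _ ⧸ Gam δ k) :=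
      (hind.comp e e.injective).map' ((Gam δ L).map (Gam δ k).mkQ).subtype (Submodule.ker_subtype _)
    choose f hf hfe using fun i => Submodule.mem_map.1 (e i : (Gam δ L).map (Gam δ k).mkQ).2
    refine ⟨fun i => ((f i).1.toMul, (f i).2), hf, ?_⟩
    rw [gammaIndep_iff]
    convert hind' using 2 with i
    exact hfe i

lemma gammaDim_eq (δ : Derivation ℤ K K) (k L : Subfield K) :
    gammaDim δ k L = Cardinal.toENat (Module.rank ℤ ((Gam δ L).map (Gam δ k).mkQ)) :=
  iSup_natCast_eq_toENat (exists_family_iff δ k L)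

/-- `dim Γ(L)/Γ(k) = dim Γ(L)/Γ(M) + dim Γ(M)/Γ(k)`. -/
lemma gammaDim_add (δ : Derivation ℤ K K) {k M L : Subfield K} (hkM : k ≤ M) (hML : M ≤ L) :
    gammaDim δ M L + gammaDim δ k M = gammaDim δ k L := by
  rw [gammaDim_eq, gammaDim_eq, gammaDim_eq, ← map_add,
    rank_map_mkQ_add (Gam_mono δ hkM) (Gam_mono δ hML)]

lemma exists_family_of_le (δ : Derivation ℤ K K) {k L : Subfield K} {n : ℕ}
    (hn : (n : ℕ∞) ≤ gammaDim δ k L) :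
    ∃ f : Fin n → Kˣ × K, (∀ i, GammaMem δ L (f i)) ∧ GammaIndep δ k f := by
  rw [gammaDim_eq, Cardinal.natCast_le_toENat] at hn
  exact (exists_family_iff δ k L n).2 hn

lemma deltaPre_nonneg_iff {der : K → K} {k L : Subfield K} (hfin : trdegE k L ≠ ⊤) :
    0 ≤ deltaPre der k L ↔ gammaDim der k L ≤ trdegE k L := by
  unfold deltaPre
  lift trdegE k L to ℕ using hfin with d
  split_ifs with h
  · simp [h]
  · lift gammaDim der k L to ℕ using h with g
    simp only [ENat.toNat_natCast, Nat.cast_le]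
    rw [← WithBot.coe_zero, WithBot.coe_le_coe]
    omega

lemma deltaPre_eq_zero_iff {der : K → K} {k L : Subfield K} (hfin : trdegE k L ≠ ⊤) :
    deltaPre der k L = 0 ↔ gammaDim der k L = trdegE k L := by
  unfold deltaPre
  lift trdegE k L to ℕ using hfin with d
  split_ifs with h
  · simp [h]
  · lift gammaDim der k L to ℕ using h with g
    simp only [ENat.toNat_natCast, Nat.cast_inj]
    rw [← WithBot.coe_zero, WithBot.coe_inj]
    omega

end Dimensions

/-! ### Comparison of the predimension with `Der_Γ` -/

section Predimension

universe u

lemma trdeg_intermediateField {C F : Type u} [Field C] [Field F] [Algebra C F]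
    (E : IntermediateField C F) :
    Algebra.trdeg C E + Algebra.trdeg E F = Algebra.trdeg C F :=
  trdeg_add_eq C E

lemma exists_fin_basis {C F : Type*} [Field C] [Field F] [Algebra C F] {d : ℕ}
    (h : Cardinal.toENat (Algebra.trdeg C F) = d) :
    ∃ t : Fin d → F, IsTranscendenceBasis C t := by
  obtain ⟨s, hs⟩ := exists_isTranscendenceBasis C F
  rw [← hs.cardinalMk_eq_trdeg, Cardinal.toENat_eq_natCast] at h
  obtain ⟨e⟩ := Cardinal.mk_eq_nat_iff.1 h
  exact ⟨_, hs.comp_equiv e.symm⟩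

variable {K : Type u} [Field K]

section

variable {k L : Subfield K} [Algebra k L]

lemma exists_derivation_of_isRelDer
    (halg : ∀ a : k, ((algebraMap k L a : L) : K) = a)
    {D : L → L} (h : IsRelDer k L D) :
    ∃ X : Derivation k L L, ⇑X = D := by
  have h0 : ∀ c : k, D (algebraMap k L c) = 0 := fun c => h.2.2 _ (by rw [halg]; exact c.2)
  exact ⟨Derivation.mk'
    { toFun := D
      map_add' := h.1
      map_smul' := fun c a => by simp [Algebra.smul_def, h.2.1, h0] }
    h.2.1, rfl⟩

lemma isRelDer_derivation
    (halg : ∀ a : k, ((algebraMap k L a : L) : K) = a)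
    (X : Derivation k L L) : IsRelDer k L X := by
  refine ⟨map_add X, X.leibniz, fun a ha => ?_⟩
  have h : algebraMap k L ⟨a, ha⟩ = a := Subtype.ext (halg _)
  rw [← h, Derivation.map_algebraMap]

end

lemma coe_prod_zpow {L : Subfield K} {n : ℕ} (f : Fin n → Kˣ) (hf : ∀ i, (f i : K) ∈ L)
    (m : Fin n → ℤ) :
    ((∏ i, (⟨_, hf i⟩ : L) ^ m i : L) : K) = ((∏ i, f i ^ m i : Kˣ) : K) := by
  rw [← L.subtype_apply, map_prod, Units.coe_prod]
  refine Finset.prod_congr rfl fun i _ => ?_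
  rw [map_zpow₀, Units.val_zpow_eq_zpow_val]
  rfl

/-- An integer relation modulo `Γ(M)` between points of `Γ(L)` gives a linear relation between the
values of the `dyᵢ/yᵢ - dxᵢ` at any derivation of `L` trivial on `M`. -/
lemma sum_omega_eq_zero {C : Type*} {L M : Subfield K} [Field C] [Algebra C L] {der : K → K}
    (X : Derivation C L L)
    (hX : ∀ a : L, (a : K) ∈ M → X a = 0) {n : ℕ} {f : Fin n → Kˣ × K}
    (hf : ∀ i, GammaMem der L (f i)) {m : Fin n → ℤ}
    (hm : GammaMem der M (∏ i, (f i).1 ^ m i, ∑ i, (m i : K) * (f i).2)) :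
    ∑ i, (m i : L) * omega (⟨_, (hf i).1⟩ : L) ⟨_, (hf i).2.1⟩ X = 0 := by
  have hy : X (∏ i, (⟨_, (hf i).1⟩ : L) ^ m i) = 0 := hX _ (by rw [coe_prod_zpow]; exact hm.1)
  have hx : X (∑ i, (m i : L) * ⟨_, (hf i).2.1⟩) = 0 := hX _ (by simpa using hm.2.1)
  have h1 := logDeriv_prod_zpow X (fun i => (⟨_, (hf i).1⟩ : L))
    (fun i h => (f i).1.ne_zero (congrArg Subtype.val h)) m
  rw [hy, zero_div] at h1
  simp only [omega_apply, mul_sub, Finset.sum_sub_distrib, ← h1]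
  simpa using hx

variable [CharZero K]

/-- If `dim Γ(L)/Γ(k) < trdeg(L/k)`, then there are fewer differentials `dy/y - dx` than the
dimension of `Der_k(L)`, so some nonzero derivation is compatible with all of `Γ(L)`. -/
lemma exists_ne_zero_of_lt (δ : Derivation ℤ K K) {k L : Subfield K} [Algebra k L]
    (halg : ∀ a : k, ((algebraMap k L a : L) : K) = a) {g d : ℕ}
    (hg : gammaDim δ k L = g) (hd : trdegE k L = d) (hgd : g < d) :
    ∃ D : L → L, InDerGamma δ k L D ∧ D ≠ 0 := by
  rw [trdegE_eq L.subtype halg (fun a => ⟨fun h => ⟨⟨a, h⟩, rfl⟩, fun ⟨b, hb⟩ => hb ▸ b.2⟩)] at hd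
  obtain ⟨t, ht⟩ := exists_fin_basis hd
  obtain ⟨hfinite, hrank⟩ := finrank_derivation ht
  obtain ⟨f, hf, hind⟩ := exists_family_of_le δ hg.ge
  let T : Derivation k L L →ₗ[L] (Fin g → L) :=
    LinearMap.pi fun i => omega (⟨_, (hf i).1⟩ : L) ⟨_, (hf i).2.1⟩
  have hker : LinearMap.ker T ≠ ⊥ := LinearMap.ker_ne_bot_of_finrank_lt (by
    rw [hrank, Module.finrank_fin_fun, Fintype.card_fin]; exact hgd)
  obtain ⟨X, hXT, hX0⟩ := Submodule.exists_mem_ne_zero_of_ne_bot hker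
  have hXf : ∀ i, omega (⟨_, (hf i).1⟩ : L) ⟨_, (hf i).2.1⟩ X = 0 := fun i =>
    congrFun (LinearMap.mem_ker.1 hXT) i
  refine ⟨X, ⟨isRelDer_derivation halg X, fun p hp => ?_⟩, fun h => hX0 (DFunLike.coe_injective h)⟩
  have hp0 : (⟨(p.1 : K), hp.1⟩ : L) ≠ 0 := fun h => p.1.ne_zero (congrArg Subtype.val h)
  suffices homega : omega (⟨_, hp.1⟩ : L) ⟨_, hp.2.1⟩ X = 0 by
    rw [omega_apply, sub_eq_zero, div_eq_iff hp0] at homega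
    rw [homega, mul_comm]
  by_contra hne
  -- otherwise `p` could be added to the maximal independent family `f`
  have hf' : ∀ i, GammaMem δ L ((Fin.cons p f : Fin (g + 1) → Kˣ × K) i) :=
    Fin.cases hp hf
  have hind' : GammaIndep δ k (Fin.cons p f : Fin (g + 1) → Kˣ × K) := by
    intro m hm
    have h1 := sum_omega_eq_zero X (isRelDer_derivation halg X).2.2 hf' hm
    rw [Fin.sum_univ_succ] at h1
    simp only [Fin.cons_zero, Fin.cons_succ, hXf, mul_zero, Finset.sum_const_zero, add_zero,
      mul_eq_zero, hne, or_false, Int.cast_eq_zero] at h1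
    have h2 : (fun i : Fin g => m i.succ) = 0 := by
      refine hind _ ?_
      simpa [Fin.prod_univ_succ, Fin.sum_univ_succ, h1] using hm
    funext i
    exact Fin.cases h1 (congrFun h2) i
  have hle : ((g + 1 : ℕ) : ℕ∞) ≤ gammaDim δ k L :=
    le_iSup₂_of_le (f := fun (n : ℕ) (_ : ∃ f : Fin n → Kˣ × K,
      (∀ i, GammaMem δ L (f i)) ∧ GammaIndep δ k f) => (n : ℕ∞)) (g + 1) ⟨_, hf', hind'⟩ le_rfl
  rw [hg, Nat.cast_le] at hle
  omega

/-- If `Γ(L)/Γ(M)` has dimension at least `trdeg(L/M)`, where `M` is the field of constants of a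
derivation in `Der_Γ(L/k)`, then this derivation is zero: otherwise Ax's theorem, applied over
`M`, contradicts independence modulo `Γ(M)`. -/
lemma eq_zero_of_le (δ : Derivation ℤ K K) {k L M : Subfield K} [Algebra k L]
    [IsAlgClosed L] (X : Derivation k L L)
    (hX : ∀ p : Kˣ × K, (hp : GammaMem δ L p) →
      X ⟨(p.1 : K), hp.1⟩ = ⟨(p.1 : K), hp.1⟩ * X ⟨p.2, hp.2.1⟩)
    (hM : ∀ a : L, (a : K) ∈ M ↔ X a = 0) {n : ℕ} {t : Fin n → L}
    (ht : IsTranscendenceBasis (kerField X) t) (hn : (n : ℕ∞) ≤ gammaDim δ M L) : X = 0 := by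
  by_contra hX0
  obtain ⟨f, hf, hind⟩ := exists_family_of_le δ hn
  have hy0 : ∀ i, (⟨_, (hf i).1⟩ : L) ≠ 0 :=
    fun i h => (f i).1.ne_zero (congrArg Subtype.val h)
  obtain ⟨m, hm0, hm⟩ := ax (overKer X)
    (fun h => hX0 (Derivation.ext fun a => by
      rw [← overKer_apply, h, Derivation.zero_apply, Derivation.zero_apply]))
    (fun a ha => ⟨⟨a, ha⟩, rfl⟩) ht (Fintype.card_fin n).le (fun i => (⟨_, (hf i).1⟩ : L))
    (fun i => ⟨_, (hf i).2.1⟩) hy0 (fun i => hX _ (hf i))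
  rw [overKer_apply] at hm
  refine hm0 (hind m ⟨?_, ?_, ?_⟩)
  · have h1 := (hM _).2 hm
    rwa [coe_prod_zpow] at h1
  · have h1 := logDeriv_prod_zpow X _ hy0 m
    rw [hm, zero_div] at h1
    have h2 : X (∑ i, (m i : L) * ⟨_, (hf i).2.1⟩) = 0 := by
      rw [h1, map_sum]
      refine Finset.sum_congr rfl fun i _ => ?_
      rw [hX _ (hf i), mul_div_cancel_left₀ _ (hy0 i)]
      simp
    simpa using (hM _).2 h2
  · have h1 : (∑ i, m i • (Additive.ofMul (f i).1, (f i).2)) ∈ Gam δ L :=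
      Submodule.sum_mem _ fun i _ => Submodule.smul_mem _ _ (hf i)
    have h2 := (mem_Gam.1 h1).2.2
    simpa [Prod.fst_sum, Prod.snd_sum, toMul_sum] using h2

/-- When `δ(L/k) = 0` and `k` is self-sufficient, the field of constants `M` of any derivation in
`Der_Γ(L/k)` satisfies `dim Γ(L)/Γ(M) ≥ trdeg(L/M)`, so the derivation vanishes. -/
lemma eq_zero_of_selfSufficient (δ : Derivation ℤ K K) {k L : Subfield K}
    [Algebra k L] (halg : ∀ a : k, ((algebraMap k L a : L) : K) = a) [IsAlgClosed L]
    (hfin : trdegE k L ≠ ⊤)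
    (hss : ∀ M : Subfield K, k ≤ M → M ≤ L → IsAlgClosed M → trdegE k M ≠ ⊤ →
      0 ≤ deltaPre δ k M)
    (hdim : gammaDim δ k L = trdegE k L) (X : Derivation k L L)
    (hX : ∀ p : Kˣ × K, (hp : GammaMem δ L p) →
      X ⟨(p.1 : K), hp.1⟩ = ⟨(p.1 : K), hp.1⟩ * X ⟨p.2, hp.2.1⟩) : X = 0 := by
  let C := kerField X
  let M : Subfield K := C.toSubfield.map L.subtype
  have hMmem : ∀ a, a ∈ M ↔ ∃ b : C, (b : L) = a := by
    intro a
    rw [Subfield.mem_map]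
    exact ⟨fun ⟨b, hb, h⟩ => ⟨⟨b, hb⟩, h⟩, fun ⟨b, h⟩ => ⟨b, b.2, h⟩⟩
  have hM : ∀ a : L, (a : K) ∈ M ↔ X a = 0 := by
    intro a
    rw [hMmem]
    refine ⟨fun ⟨b, hb⟩ => ?_, fun h => ⟨⟨a, h⟩, rfl⟩⟩
    obtain rfl : (b : L) = a := Subtype.ext hb
    exact b.2
  have hkM : k ≤ M := fun a ha => (hMmem a).2 ⟨algebraMap k C ⟨a, ha⟩, halg _⟩
  have hML : M ≤ L := fun a ha => by
    obtain ⟨b, rfl⟩ := (hMmem a).1 ha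
    exact b.1.2
  have hCalg : IsAlgClosed C := by
    refine IsAlgClosed.of_exists_root _ fun p hp hirr => ?_
    have hdeg : (p.map (algebraMap C L)).degree ≠ 0 := by
      rw [degree_map]; exact hirr.degree_pos.ne'
    obtain ⟨a, ha⟩ := IsAlgClosed.exists_root _ hdeg
    have ha' : aeval a p = 0 := by rwa [IsRoot.def, eval_map_algebraMap] at ha
    have haC : a ∈ C := mem_kerField_of_isAlgebraic X ⟨p, hirr.ne_zero, ha'⟩
    refine ⟨⟨a, haC⟩, (algebraMap C L).injective ?_⟩
    rw [map_zero, ← ha', ← eval_map_algebraMap, ← eval_map_apply]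
    rfl
  have hMalg : IsAlgClosed M := by
    let e : C →+* M := (L.subtype.comp (algebraMap C L)).codRestrict M
      fun b => (hMmem _).2 ⟨b, rfl⟩
    have he : Function.Bijective e := ⟨e.injective, fun a => by
      obtain ⟨b, hb⟩ := (hMmem a).1 a.2
      exact ⟨b, Subtype.ext hb⟩⟩
    exact IsAlgClosed.of_ringEquiv _ _ (RingEquiv.ofBijective e he)
  have htL : trdegE k L = Cardinal.toENat (Algebra.trdeg k L) :=
    trdegE_eq L.subtype halg (fun a => ⟨fun h => ⟨⟨a, h⟩, rfl⟩, fun ⟨b, hb⟩ => hb ▸ b.2⟩)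
  have htM : trdegE k M = Cardinal.toENat (Algebra.trdeg k C) :=
    trdegE_eq (L.subtype.comp (algebraMap C L)) halg hMmem
  have hadd : trdegE k M + Cardinal.toENat (Algebra.trdeg C L) = trdegE k L := by
    rw [htM, htL, ← map_add, trdeg_intermediateField]
  have hMfin : trdegE k M ≠ ⊤ := fun h => hfin (by rw [← hadd, h, top_add])
  have hle := (deltaPre_nonneg_iff hMfin).1 (hss M hkM hML hMalg hMfin)
  obtain ⟨n, hn⟩ := ENat.ne_top_iff_exists.1
    (fun h : Cardinal.toENat (Algebra.trdeg C L) = ⊤ => hfin (by rw [← hadd, h, add_top]))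
  obtain ⟨t, ht⟩ := exists_fin_basis hn.symm
  refine eq_zero_of_le δ X hX hM ht ?_
  have h1 := gammaDim_add δ hkM hML
  rw [hdim, ← hadd, ← hn, add_comm (trdegE k M)] at h1
  have h2 : (n : ℕ∞) + trdegE k M ≤ gammaDim δ M L + trdegE k M := by
    rw [← h1]; gcongr
  exact (ENat.add_le_add_iff_right hMfin).1 h2

end Predimension

end AxPredim

open AxPredim in
theorem stmt4 {K : Type*} [Field K] [CharZero K]
    (der : K → K)
    (hadd : ∀ a b : K, der (a + b) = der a + der b)
    (hmul : ∀ a b : K, der (a * b) = a * der b + b * der a)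
    (k L : Subfield K) (hkL : k ≤ L)
    (hkalg : IsAlgClosed ↥k) (hLalg : IsAlgClosed ↥L)
    (hfin : trdegE k L ≠ ⊤)
    (hconst : ∀ x ∈ L, der x = 0 → x ∈ k)
    -- k is self-sufficient in L:
    (hss : ∀ M : Subfield K, k ≤ M → M ≤ L → IsAlgClosed ↥M → trdegE k M ≠ ⊤ →
      0 ≤ deltaPre der k M) :
    deltaPre der k L = 0 ↔ ∀ D : ↥L → ↥L, InDerGamma der k L D → D = 0 := by
  obtain ⟨δ, rfl⟩ : ∃ δ : Derivation ℤ K K, ⇑δ = der :=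
    ⟨Derivation.mk' (AddMonoidHom.mk' der hadd).toIntLinearMap hmul, rfl⟩
  let _ : Algebra k L := (Subfield.inclusion hkL).toAlgebra
  have halg : ∀ a : k, ((algebraMap k L a : L) : K) = a := fun _ => rfl
  rw [deltaPre_eq_zero_iff hfin]
  constructor
  · intro hdim D hD
    obtain ⟨X, rfl⟩ := exists_derivation_of_isRelDer halg hD.1
    rw [eq_zero_of_selfSufficient δ halg hfin hss hdim X hD.2]
    rfl
  · intro h
    have hle := (deltaPre_nonneg_iff hfin).1 (hss L hkL le_rfl hLalg hfin)
    obtain ⟨d, hd⟩ := ENat.ne_top_iff_exists.1 hfin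
    obtain ⟨g, hg⟩ := ENat.ne_top_iff_exists.1 (ne_top_of_le_ne_top hfin hle)
    rw [← hd, ← hg, Nat.cast_le] at hle
    rw [← hd, ← hg, Nat.cast_inj]
    by_contra hne
    obtain ⟨D, hD, hD0⟩ := exists_ne_zero_of_lt δ halg hg.symm hd.symm (by omega)
    exact hD0 (h D hD)
end

section
/- Let (K, ∂) be a differential field of characteristic zero and let k ⊆ L ⊆ M ⊆ K be algebraically closed intermediate fields with trdeg(M/k) finite. Then the exponential predimension is additive in towers: δ(M/k) = δ(M/L) + δ(L/k) (with the convention that the equality holds in ℤ ∪ {−∞}). -/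
/-!
Both terms of `δ` are ranks, and both ranks are additive in towers.

* The sets `Γ(L)` are subgroups of the abelian group `Additive Kˣ × K`, and membership of an element
  of `Γ(K)` in `Γ(k)` is what `GammaIndep` tests. So `gammaDim der k L` is the rank over `ℤ` of the
  image of `Γ(L)` in the quotient by `Γ(k)` (`gammaDim_eq_rank`), and rank-nullity for the map
  `Γ(M)/Γ(k) → Γ(M)/Γ(L)`, whose kernel is `Γ(L)/Γ(k)`, gives additivity (`rank_map_mkQ_add`).
  Rank-nullity holds for modules over a domain, so this argument uses neither divisibility nor
  torsion-freeness of the quotients.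
* `trdegE k L` is Mathlib's `Algebra.trdeg`, truncated to `ℕ∞` (`trdegE_eq_trdeg`), which is additive
  by `trdeg_add_eq`.

As `trdeg(M/k)` is finite, the transcendence degrees are natural numbers, and additivity of `δ`
follows by splitting on whether the dimensions of `Γ(M)/Γ(L)` and `Γ(L)/Γ(k)` are finite.
-/

open scoped Classical

theorem iSup_natCast_le_eq (c : ℕ∞) : (⨆ (n : ℕ) (_ : (n : ℕ∞) ≤ c), (n : ℕ∞)) = c := by
  refine le_antisymm (iSup₂_le fun _ h => h) ?_
  refine ENat.forall_natCast_le_iff_le.mp fun a ha => ?_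
  exact le_iSup₂_of_le a ha le_rfl

/-- For submodules `S ≤ T ≤ U`, rank-nullity for the projection `U/S → U/T`, with each quotient
realised as the image of a submodule of the ambient module. -/
theorem rank_map_mkQ_add {V : Type*} [AddCommGroup V] (S T U : Submodule ℤ V)
    (hST : S ≤ T) (hTU : T ≤ U) :
    Module.rank ℤ (U.map S.mkQ) = Module.rank ℤ (U.map T.mkQ) + Module.rank ℤ (T.map S.mkQ) := by
  let F : (V ⧸ S) →ₗ[ℤ] (V ⧸ T) := Submodule.factor hST
  let f := F.domRestrict (U.map S.mkQ)
  have hr : LinearMap.range f = U.map T.mkQ := by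
    rw [LinearMap.range_domRestrict, ← Submodule.map_comp]
    rfl
  have hk : (LinearMap.ker f).map (U.map S.mkQ).subtype = T.map S.mkQ := by
    ext v
    constructor
    · rintro ⟨⟨_, u, hu, rfl⟩, h, rfl⟩
      exact ⟨u, (Submodule.Quotient.mk_eq_zero T).mp h, rfl⟩
    · rintro ⟨t, ht, rfl⟩
      exact ⟨⟨S.mkQ t, t, hTU ht, rfl⟩, (Submodule.Quotient.mk_eq_zero T).mpr ht, rfl⟩
  rw [← hr, ← hk, rank_map_eq (Submodule.subtype_injective _), LinearMap.rank_range_add_rank_ker]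

section Gamma

variable {K : Type*} [Field K] (der : K → K)
  (hadd : ∀ a b : K, der (a + b) = der a + der b)
  (hmul : ∀ a b : K, der (a * b) = a * der b + b * der a)

/-- `Γ(L)` as a `ℤ`-submodule of `K^× × K`, the multiplicative group being written additively. -/
def gammaSubmodule (L : Subfield K) : Submodule ℤ (Additive Kˣ × K) :=
  AddSubgroup.toIntSubmodule
    { carrier := {p | GammaMem der L (p.1.toMul, p.2)}
      zero_mem' := by
        have h0 : der 0 = 0 := by simpa using hadd 0 0
        have h1 : der 1 = 0 := by simpa using hmul 1 1
        simp [GammaMem, h0, h1, one_mem, zero_mem]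
      add_mem' := by
        rintro ⟨y, x⟩ ⟨y', x'⟩ ⟨h1, h2, h3⟩ ⟨h1', h2', h3'⟩
        refine ⟨mul_mem h1 h1', add_mem h2 h2', ?_⟩
        simp only [toMul_add, Units.val_mul, Prod.mk_add_mk, hadd, hmul] at h3 h3' ⊢
        rw [h3, h3']
        ring
      neg_mem' := by
        rintro ⟨y, x⟩ ⟨h1, h2, h3⟩
        have hy : ((y.toMul : Kˣ) : K) ≠ 0 := Units.ne_zero _
        refine ⟨by simpa using inv_mem h1, neg_mem h2, ?_⟩
        have h0 : der 0 = 0 := by simpa using hadd 0 0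
        have h1 : der 1 = 0 := by simpa using hmul 1 1
        have hneg : der (-x) = -der x := by
          have h := hadd x (-x)
          rw [add_neg_cancel, h0] at h
          linear_combination -h
        have hinv := hmul (y.toMul : Kˣ) ((y.toMul : Kˣ) : K)⁻¹
        simp only [Prod.neg_mk, toMul_neg, Units.val_inv_eq_inv_val] at h3 ⊢
        rw [mul_inv_cancel₀ hy, h1, h3, ← mul_assoc, inv_mul_cancel₀ hy] at hinv
        rw [hneg]
        apply mul_left_cancel₀ hy
        rw [← mul_assoc, mul_inv_cancel₀ hy]
        linear_combination -hinv }

theorem mem_gammaSubmodule {L : Subfield K} {p : Additive Kˣ × K} :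
    p ∈ gammaSubmodule der hadd hmul L ↔ GammaMem der L (p.1.toMul, p.2) := Iff.rfl

theorem gammaSubmodule_mono {k L : Subfield K} (h : k ≤ L) :
    gammaSubmodule der hadd hmul k ≤ gammaSubmodule der hadd hmul L :=
  fun _ hp => ⟨h hp.1, h hp.2.1, hp.2.2⟩

/-- An integer combination of elements of `K^× × K` vanishes modulo `Γ(k)` exactly when it satisfies
`GammaMem der k`, so `GammaIndep` is `ℤ`-linear independence in the quotient by `Γ(k)`. -/
theorem gammaIndep_iff {k : Subfield K} {n : ℕ} (f : Fin n → Kˣ × K) :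
    GammaIndep der k f ↔ LinearIndependent ℤ
      (fun i => (gammaSubmodule der hadd hmul k).mkQ (Additive.ofMul (f i).1, (f i).2)) := by
  rw [Fintype.linearIndependent_iff]
  refine forall_congr' fun m => ?_
  have h : (∑ i, m i • (gammaSubmodule der hadd hmul k).mkQ (Additive.ofMul (f i).1, (f i).2) = 0)
      ↔ GammaMem der k (∏ i, (f i).1 ^ m i, ∑ i, (m i : K) * (f i).2) := by
    simp only [← map_smul, ← map_sum]
    rw [Submodule.mkQ_apply, Submodule.Quotient.mk_eq_zero, mem_gammaSubmodule]
    simp [Prod.fst_sum, Prod.snd_sum, toMul_sum]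
  rw [h, funext_iff]
  rfl

theorem gammaDim_eq_rank (k L : Subfield K) :
    gammaDim der k L = Cardinal.toENat (Module.rank ℤ
      ((gammaSubmodule der hadd hmul L).map (gammaSubmodule der hadd hmul k).mkQ)) := by
  rw [← iSup_natCast_le_eq (Cardinal.toENat _), gammaDim]
  refine iSup_congr fun n => iSup_congr_Prop ?_ fun _ => rfl
  rw [Cardinal.natCast_le_toENat, Module.le_rank_iff]
  constructor
  · rintro ⟨f, hf, hi⟩
    refine ⟨fun i => ⟨_, (Additive.ofMul (f i).1, (f i).2), hf i, rfl⟩, ?_⟩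
    exact .of_comp (Submodule.subtype _) ((gammaIndep_iff der hadd hmul f).mp hi)
  · rintro ⟨v, hv⟩
    choose g hg hgv using fun i => (v i).2
    refine ⟨fun i => ((g i).1.toMul, (g i).2), hg, (gammaIndep_iff der hadd hmul _).mpr ?_⟩
    have h := hv.map' (Submodule.subtype _) (Submodule.ker_subtype _)
    have hg' : (fun i => (gammaSubmodule der hadd hmul k).mkQ (g i)) = fun i => (v i).1 :=
      funext hgv
    exact hg' ▸ h

include hadd hmul in
theorem gammaDim_add {k L M : Subfield K} (hkL : k ≤ L) (hLM : L ≤ M) :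
    gammaDim der k M = gammaDim der L M + gammaDim der k L := by
  simp only [gammaDim_eq_rank der hadd hmul]
  rw [← map_add, rank_map_mkQ_add _ _ _ (gammaSubmodule_mono der hadd hmul hkL)
    (gammaSubmodule_mono der hadd hmul hLM)]

end Gamma

section Trdeg

variable {K : Type*} [Field K]

/-- Polynomials over `K` with coefficients in `k` are the images of polynomials over `k`. -/
theorem algIndepOver_iff (k : Subfield K) {n : ℕ} (x : Fin n → K) :
    AlgIndepOver k x ↔ AlgebraicIndependent k x := by
  rw [algebraicIndependent_iff]
  have key (p : MvPolynomial (Fin n) k) : MvPolynomial.aeval x p =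
      MvPolynomial.eval x (MvPolynomial.map k.subtype p) := by
    rw [MvPolynomial.eval_map]
    rfl
  constructor
  · intro h p hp
    apply MvPolynomial.map_injective k.subtype k.subtype_injective
    rw [map_zero]
    refine h _ (fun m => ?_) (by rw [← key, hp])
    rw [MvPolynomial.coeff_map]
    exact (p.coeff m).2
  · intro h P hc hP
    obtain ⟨p, rfl⟩ : P ∈ Set.range (MvPolynomial.map (σ := Fin n) k.subtype) := by
      rw [MvPolynomial.mem_range_map_iff_coeffs_subset]
      intro c hc'
      obtain ⟨m, -, rfl⟩ := MvPolynomial.mem_coeffs_iff.mp hc'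
      exact ⟨⟨_, hc m⟩, rfl⟩
    rw [h p (by rw [key, hP]), map_zero]

theorem natCast_le_trdeg_iff {k A : Type*} [Field k] [Field A] [Algebra k A] {n : ℕ} :
    (n : Cardinal) ≤ Algebra.trdeg k A ↔ ∃ x : Fin n → A, AlgebraicIndependent k x := by
  constructor
  · intro h
    obtain ⟨s, hs⟩ := exists_isTranscendenceBasis k A
    rw [← hs.cardinalMk_eq_trdeg, ← Cardinal.lift_mk_fin] at h
    obtain ⟨e⟩ := Cardinal.lift_mk_le'.mp (h.trans_eq (Cardinal.lift_uzero _).symm)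
    exact ⟨_, hs.1.comp e e.injective⟩
  · rintro ⟨x, hx⟩
    have := hx.lift_cardinalMk_le_trdeg
    simpa using this

/-- `L` as a `k`-algebra, for subfields `k ≤ L` of `K`. -/
abbrev subfieldAlgebra {k L : Subfield K} (h : k ≤ L) : Algebra k L :=
  (Subfield.inclusion h).toAlgebra

theorem trdegE_eq_trdeg {k L : Subfield K} (h : k ≤ L) :
    letI := subfieldAlgebra h
    trdegE k L = Cardinal.toENat (Algebra.trdeg k L) := by
  let := subfieldAlgebra h
  let φ : L →ₐ[k] K := { L.subtype with commutes' := fun _ => rfl }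
  have hφ : Function.Injective φ := L.subtype_injective
  rw [← iSup_natCast_le_eq (Cardinal.toENat _), trdegE]
  refine iSup_congr fun n => iSup_congr_Prop ?_ fun _ => rfl
  rw [Cardinal.natCast_le_toENat, natCast_le_trdeg_iff]
  constructor
  · rintro ⟨x, hx, hi⟩
    refine ⟨fun i => ⟨x i, hx i⟩, ?_⟩
    rw [← φ.algebraicIndependent_iff hφ]
    exact (algIndepOver_iff k x).mp hi
  · rintro ⟨x, hx⟩
    refine ⟨fun i => x i, fun i => (x i).2, (algIndepOver_iff k _).mpr ?_⟩
    exact hx.map' (f := φ) hφ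

theorem trdegE_add {k L M : Subfield K} (hkL : k ≤ L) (hLM : L ≤ M) :
    trdegE k M = trdegE L M + trdegE k L := by
  let := subfieldAlgebra hkL
  let := subfieldAlgebra hLM
  let := subfieldAlgebra (hkL.trans hLM)
  have : IsScalarTower k L M := .of_algebraMap_eq fun _ => rfl
  rw [trdegE_eq_trdeg hkL, trdegE_eq_trdeg hLM, trdegE_eq_trdeg (hkL.trans hLM), ← map_add,
    add_comm, trdeg_add_eq]

end Trdeg

/-!
STATEMENT 5: For algebraically closed intermediate fields `k ⊆ L ⊆ M ⊆ K` with
`trdeg(M/k)` finite, the exponential predimension is additive in towers: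
`δ(M/k) = δ(M/L) + δ(L/k)` in `ℤ ∪ {−∞}`.
-/

theorem stmt5 {K : Type*} [Field K] [CharZero K]
    (der : K → K)
    (hadd : ∀ a b : K, der (a + b) = der a + der b)
    (hmul : ∀ a b : K, der (a * b) = a * der b + b * der a)
    (k L M : Subfield K) (hkL : k ≤ L) (hLM : L ≤ M)
    (hkalg : IsAlgClosed ↥k) (hLalg : IsAlgClosed ↥L) (hMalg : IsAlgClosed ↥M)
    (hfin : trdegE k M ≠ ⊤) :
    deltaPre der k M = deltaPre der L M + deltaPre der k L := by
  have hG := gammaDim_add der hadd hmul hkL hLM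
  have hT := trdegE_add hkL hLM
  rw [hT, ne_eq, ENat.add_eq_top, not_or] at hfin
  simp only [deltaPre, hG, hT, ENat.add_eq_top]
  by_cases h1 : gammaDim der L M = ⊤
  · simp [h1]
  by_cases h2 : gammaDim der k L = ⊤
  · simp [h2]
  rw [if_neg (by tauto), if_neg h1, if_neg h2, ENat.toNat_add hfin.1 hfin.2, ENat.toNat_add h1 h2,
    ← WithBot.coe_add]
  congr 1
  push_cast
  ring
end

section
/- Let (L, ∂) be a differential field of characteristic zero with field of constants C = {x ∈ L : ∂x = 0}, and let k ⊆ L be a differential subfield (∂(k) ⊆ k). If D₁, …, Dₙ ∈ Der_k(L) are k-linear derivations of L that commute with ∂ (i.e. ∂∘Dᵢ = Dᵢ∘∂ for each i) and are linearly independent over C, then D₁, …, Dₙ are linearly independent over L. -/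
/-!
The proof is the minimal-relation argument familiar from Wronskians. Normalise an `L`-linear
relation `∑ cᵢ Dᵢ = 0` so that some coefficient is `1`, and apply `der`. Since `der` commutes
with each `Dᵢ`, the terms `cᵢ Dᵢ (der x)` sum to zero by the relation itself, so the
derivatives `der cᵢ` are again the coefficients of a relation, with strictly smaller support
because `der 1 = 0`. By induction on the size of the support all `der cᵢ` vanish, so the
normalised relation has constant coefficients, contradicting independence over the constants.
-/

theorem stmt9 {L : Type*} [Field L] [CharZero L]
    (der : L → L)
    (hadd : ∀ a b : L, der (a + b) = der a + der b)
    (hmul : ∀ a b : L, der (a * b) = a * der b + b * der a)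
    (k : Subfield L) (hk : ∀ c ∈ k, der c ∈ k)
    {n : ℕ} (D : Fin n → (L → L))
    (hDadd : ∀ i, ∀ a b : L, D i (a + b) = D i a + D i b)
    (hDmul : ∀ i, ∀ a b : L, D i (a * b) = a * D i b + b * D i a)
    (hDk : ∀ i, ∀ c ∈ k, D i c = 0)
    (hcomm : ∀ i, ∀ x : L, der (D i x) = D i (der x))
    -- D₁, …, Dₙ are linearly independent over the constants C:
    (hCindep : ∀ c : Fin n → L, (∀ i, der (c i) = 0) →
      (∀ x : L, ∑ i, c i * D i x = 0) → ∀ i, c i = 0) :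
    -- they are linearly independent over L:
    ∀ c : Fin n → L, (∀ x : L, ∑ i, c i * D i x = 0) → ∀ i, c i = 0 := by
  have h0 : der 0 = 0 := by simpa using hmul 0 0
  have h1 : der 1 = 0 := by simpa using hmul 1 1
  have hsum (f : Fin n → L) : der (∑ i, f i) = ∑ i, der (f i) :=
    map_sum (⟨⟨der, h0⟩, hadd⟩ : L →+ L) f Finset.univ
  classical
  intro c
  induction hm : (Finset.univ.filter fun i => c i ≠ 0).card using Nat.strong_induction_on
    generalizing c with
  | _ m ih =>
  intro hc
  by_contra! hne
  obtain ⟨j, hj⟩ := hne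
  have hd (x : L) : ∑ i, c i / c j * D i x = 0 := by
    have h : ∑ i, c i / c j * D i x = (∑ i, c i * D i x) / c j := by
      rw [Finset.sum_div]
      exact Finset.sum_congr rfl fun i _ => by ring
    rw [h, hc, zero_div]
  have he (x : L) : ∑ i, der (c i / c j) * D i x = 0 := by
    have h : der (∑ i, c i / c j * D i x) = 0 := by rw [hd, h0]
    rw [hsum] at h
    simp only [hmul, hcomm, Finset.sum_add_distrib, hd, zero_add] at h
    simpa only [mul_comm] using h
  have hlt : (Finset.univ.filter fun i => der (c i / c j) ≠ 0).card < m := by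
    rw [← hm]
    refine Finset.card_lt_card (Finset.ssubset_iff_of_subset ?_ |>.2 ⟨j, ?_, ?_⟩)
    · intro i
      simp only [Finset.mem_filter, Finset.mem_univ, true_and]
      intro hi hci
      exact hi (by rw [hci, zero_div, h0])
    · simpa using hj
    · simp [div_self hj, h1]
  have hz := hCindep (fun i => c i / c j) (ih _ hlt _ rfl he) hd j
  simp [div_self hj] at hz
end
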